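/- arXiv:1109.3026 — 4 statements merged into one kernel-verified Lean document; each statement's English description precedes it below -/
import Mathlib

section
/- The following three statements are equivalent: (1) the weighted discrete Hilbert transform (a_n) ↦ (z ↦ ∑_{n≥1} a_n v_n/(z−γ_n)) is bounded from ℓ²_v to L²(ℂ,μ); (2) μ is a Carleson measure for 𝓗(Γ,v); (3) both sup_{n≥1} ∫_{Ω_n} v_n/|z−γ_n|² dμ(z) < ∞ and sup_{n≥1} ( (∑_{m=1}^{n} v_m)·(∑_{m=n+1}^∞ ∫_{Ω_m} |z|^{-2} dμ(z)) + (∑_{m=n+1}^∞ v_m/|γ_m|²)·(∑_{m=1}^{n} μ(Ω_m)) ) < ∞ hold. -/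
open MeasureTheory Filter Topology
open scoped ENNReal NNReal

noncomputable section

/-! Sequences are indexed by `ℕ`, with the Lean index `n : ℕ` corresponding to the
paper's index `n + 1` (so `γ 0` is the paper's `γ_1`, `Omega γ 0` is the paper's `Ω_1`,
the paper's partial sum `∑_{m=1}^{n} v_m` is `∑ m ∈ Finset.range (n+1), v m`, and the
paper's tail `∑_{m=n+1}^∞ c_m` is `∑' m : ℕ, c (n+1+m)`). -/

/-- The annular shells `Ω_n` (here `Omega γ 0` is the paper's `Ω_1`). -/
def Omega (γ : ℕ → ℂ) : ℕ → Set ℂ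
  | 0 => {z : ℂ | ‖z‖ < (‖γ 0‖ + ‖γ 1‖) / 2}
  | n + 1 => {z : ℂ | (‖γ n‖ + ‖γ (n + 1)‖) / 2 ≤ ‖z‖ ∧ ‖z‖ < (‖γ (n + 1)‖ + ‖γ (n + 2)‖) / 2}

/-- The sparseness condition `inf_n |γ_{n+1}|/|γ_n| > 1`. -/
def Sparse (γ : ℕ → ℂ) : Prop := ∃ c : ℝ, 1 < c ∧ ∀ n, c * ‖γ n‖ ≤ ‖γ (n + 1)‖

/-- The admissibility condition `∑_n v_n/(1+|γ_n|²) < ∞`. -/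
def Admissible (γ : ℕ → ℂ) (v : ℕ → ℝ) : Prop :=
  Summable fun n => v n / (1 + ‖γ n‖ ^ 2)

/-- Membership in `ℓ²_v`. -/
def MemL2v (v : ℕ → ℝ) (a : ℕ → ℂ) : Prop := Summable fun n => ‖a n‖ ^ 2 * v n

/-- The squared norm `‖a‖²_v = ∑_n |a_n|² v_n`. -/
def normSqV (v : ℕ → ℝ) (a : ℕ → ℂ) : ℝ := ∑' n, ‖a n‖ ^ 2 * v n

/-- The set `(Γ,v)* = {z : ∑_n v_n/|z-γ_n|² < ∞}`. -/
def GammaStar (γ : ℕ → ℂ) (v : ℕ → ℝ) : Set ℂ :=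
  {z : ℂ | Summable fun n => v n / ‖z - γ n‖ ^ 2}

/-- The function of `𝓗(Γ,v)` with coefficient sequence `a`:
`f(z) = ∑_n a_n v_n/(z-γ_n)`. -/
def Hfun (γ : ℕ → ℂ) (v : ℕ → ℝ) (a : ℕ → ℂ) (z : ℂ) : ℂ :=
  ∑' n, a n * (v n : ℂ) / (z - γ n)

/-- `μ` is a Carleson measure for `𝓗(Γ,v)`:
`∫_ℂ |f|² dμ ≤ C ‖a‖²_v` for every `f ∈ 𝓗(Γ,v)` with coefficients `a ∈ ℓ²_v`. -/
def IsCarleson (γ : ℕ → ℂ) (v : ℕ → ℝ) (μ : Measure ℂ) : Prop :=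
  ∃ C : ℝ, 0 < C ∧ ∀ a : ℕ → ℂ, MemL2v v a →
    ∫⁻ z, (‖Hfun γ v a z‖₊ : ℝ≥0∞) ^ 2 ∂μ ≤ ENNReal.ofReal (C * normSqV v a)

/-- The sequence `(a k)` of coefficient sequences converges weakly to zero in `ℓ²_v`:
it is norm bounded and `∑_n a^{(k)}_n v_n conj(b_n) → 0` for every `b ∈ ℓ²_v`. -/
def WeaklyNull (v : ℕ → ℝ) (a : ℕ → ℕ → ℂ) : Prop :=
  (∃ M : ℝ, ∀ k, normSqV v (a k) ≤ M) ∧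
    ∀ b : ℕ → ℂ, MemL2v v b →
      Tendsto (fun k => ∑' n, a k n * (v n : ℂ) * (starRingEnd ℂ) (b n)) atTop (𝓝 0)

/-- `μ` is a compact (vanishing) Carleson measure for `𝓗(Γ,v)`: it is Carleson and
`∫_ℂ |f_k|² dμ → 0` for every weakly null sequence in `𝓗(Γ,v)`. -/
def IsCompactCarleson (γ : ℕ → ℂ) (v : ℕ → ℝ) (μ : Measure ℂ) : Prop :=
  IsCarleson γ v μ ∧
    ∀ a : ℕ → ℕ → ℂ, (∀ k, MemL2v v (a k)) → WeaklyNull v a →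
      Tendsto (fun k => ∫⁻ z, (‖Hfun γ v (a k) z‖₊ : ℝ≥0∞) ^ 2 ∂μ) atTop (𝓝 0)

/-- The local quantity `∫_{Ω_n} v_n/|z-γ_n|² dμ(z)`. -/
def localTerm (γ : ℕ → ℂ) (v : ℕ → ℝ) (μ : Measure ℂ) (n : ℕ) : ℝ≥0∞ :=
  ∫⁻ z in Omega γ n, ENNReal.ofReal (v n / ‖z - γ n‖ ^ 2) ∂μ

/-- The global quantity
`(∑_{m=1}^n v_m)·(∑_{m=n+1}^∞ ∫_{Ω_m} |z|⁻² dμ) + (∑_{m=n+1}^∞ v_m/|γ_m|²)·(∑_{m=1}^n μ(Ω_m))`. -/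
def globalTerm (γ : ℕ → ℂ) (v : ℕ → ℝ) (μ : Measure ℂ) (n : ℕ) : ℝ≥0∞ :=
  ENNReal.ofReal (∑ m ∈ Finset.range (n + 1), v m) *
      (∑' m : ℕ, ∫⁻ z in Omega γ (n + 1 + m), ENNReal.ofReal (1 / ‖z‖ ^ 2) ∂μ) +
    ENNReal.ofReal (∑' m : ℕ, v (n + 1 + m) / ‖γ (n + 1 + m)‖ ^ 2) *
      (∑ m ∈ Finset.range (n + 1), μ (Omega γ m))

/-! On the shell `Ω_n` sparseness makes the kernel `1 / (z - γ_m)` comparable to `1 / z` for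
`m < n` and to `1 / γ_m` for `m > n`. So the transform splits there into a single near term and two
far parts, and taking the far parts over all shells gives a discrete Hardy operator and a dual one.
The near terms are controlled by the local condition; the global condition is the Muckenhoupt
condition for the two Hardy operators, which are bounded by Schur's test.

Conversely, one tests the Carleson inequality on one-point sequences, on initial segments and on
tails. For the last two no cancellation occurs, because `Re (z / (z - w)) ≥ 1 / 2` for `|w| < |z|`.
-/

theorem ennreal_tsum_sq_le_tsum_mul_tsum {ι : Type*} {s x y : ι → ℝ≥0∞}
    (h : ∀ i, s i ^ 2 ≤ x i * y i) : (∑' i, s i) ^ 2 ≤ (∑' i, x i) * ∑' i, y i := by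
  rw [ENNReal.tsum_eq_iSup_sum, ENNReal.iSup_pow]
  refine iSup_le fun t ↦ ?_
  have hsqrt (i : ι) : s i ≤ x i ^ (1 / 2 : ℝ) * y i ^ (1 / 2 : ℝ) := by
    rw [← ENNReal.mul_rpow_of_nonneg _ _ one_half_pos.le, one_div,
      ENNReal.le_rpow_inv_iff two_pos]
    exact_mod_cast h i
  have holder := ENNReal.inner_le_Lp_mul_Lq t (fun i ↦ x i ^ (1 / 2 : ℝ))
    (fun i ↦ y i ^ (1 / 2 : ℝ)) Real.HolderConjugate.two_two
  simp only [← ENNReal.rpow_mul, one_div_mul_cancel (two_ne_zero' ℝ), ENNReal.rpow_one,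
    ← ENNReal.mul_rpow_of_nonneg _ _ (one_half_pos (α := ℝ)).le] at holder
  have hsum : ∑ i ∈ t, s i ≤ ((∑ i ∈ t, x i) * ∑ i ∈ t, y i) ^ (2⁻¹ : ℝ) := by
    rw [← one_div]
    refine le_trans (Finset.sum_le_sum fun i _ ↦ ?_) holder
    exact (hsqrt i).trans_eq (ENNReal.mul_rpow_of_nonneg _ _ one_half_pos.le).symm
  calc (∑ i ∈ t, s i) ^ 2 ≤ (∑ i ∈ t, x i) * ∑ i ∈ t, y i := by
        exact_mod_cast (ENNReal.le_rpow_inv_iff two_pos).1 hsum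
    _ ≤ (∑' i, x i) * ∑' i, y i := by gcongr <;> exact ENNReal.sum_le_tsum t

theorem ennreal_add_add_sq_le (a b c : ℝ≥0∞) :
    (a + b + c) ^ 2 ≤ 3 * (a ^ 2 + b ^ 2 + c ^ 2) := by
  simpa [Fin.sum_univ_three, tsum_fintype] using
    ennreal_tsum_sq_le_tsum_mul_tsum (s := ![a, b, c]) (x := 1) (y := fun i ↦ ![a, b, c] i ^ 2)
      (by simp)

-- The inequality `(b² - a²) / b ≤ 2 (b - a)` without subtraction: it makes the sums of
-- `(b² - a²) / b` below telescope.
theorem ennreal_mul_inv_add_le {a b y : ℝ≥0∞} (h : a ^ 2 + y = b ^ 2) :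
    y * b⁻¹ + 2 * a ≤ 2 * b := by
  have hab : a ≤ b := (ENNReal.pow_le_pow_left_iff two_ne_zero).1 (le_self_add.trans_eq h)
  obtain ⟨d, rfl⟩ := exists_add_of_le hab
  rcases eq_or_ne a ⊤ with rfl | ha
  · simp
  have hy : y ≤ 2 * d * (a + d) := by
    have hy' : y = d * (2 * a + d) := by
      rw [← ENNReal.add_right_inj (a := a ^ 2) (by finiteness), h]
      ring
    calc y = d * (2 * a + d) := hy'
      _ ≤ d * (2 * a + d) + d * d := le_self_add
      _ = 2 * d * (a + d) := by ring
  calc y * (a + d)⁻¹ + 2 * a ≤ 2 * d + 2 * a := by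
        gcongr ?_ + _
        exact ENNReal.div_le_of_le_mul hy
    _ = 2 * (a + d) := by ring

theorem ennreal_rpow_half_sq (x : ℝ≥0∞) : (x ^ (1 / 2 : ℝ)) ^ 2 = x := by
  rw [← ENNReal.rpow_two, ← ENNReal.rpow_mul, one_div_mul_cancel two_ne_zero, ENNReal.rpow_one]

theorem sum_range_mul_rpow_half_inv_le (v : ℕ → ℝ≥0∞) (n : ℕ) :
    ∑ m ∈ Finset.range n, v m * ((∑ k ∈ Finset.range (m + 1), v k) ^ (1 / 2 : ℝ))⁻¹ ≤
      2 * (∑ k ∈ Finset.range n, v k) ^ (1 / 2 : ℝ) := by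
  induction n with
  | zero => simp
  | succ n ih =>
    rw [Finset.sum_range_succ, add_comm]
    grw [ih, Finset.sum_range_succ v n]
    exact ennreal_mul_inv_add_le (by simp only [ennreal_rpow_half_sq])

theorem tsum_mul_rpow_half_inv_le (w : ℕ → ℝ≥0∞) :
    ∑' n, w n * ((∑' k, w (n + k)) ^ (1 / 2 : ℝ))⁻¹ ≤ 2 * (∑' n, w n) ^ (1 / 2 : ℝ) := by
  have htail (n : ℕ) : ∑' k, w (n + k) = ∑' k, w (n + 1 + k) + w n := by
    rw [tsum_eq_zero_add' ENNReal.summable, add_comm]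
    simp [add_assoc, add_comm 1]
  have telescope (N : ℕ) :
      ∑ n ∈ Finset.range N, w n * ((∑' k, w (n + k)) ^ (1 / 2 : ℝ))⁻¹ +
        2 * (∑' k, w (N + k)) ^ (1 / 2 : ℝ) ≤ 2 * (∑' n, w n) ^ (1 / 2 : ℝ) := by
    induction N with
    | zero => simp
    | succ N ih =>
      rw [Finset.sum_range_succ, add_assoc]
      refine le_trans (add_le_add_right ?_ _) ih
      rw [htail N]
      exact ennreal_mul_inv_add_le (by simp only [ennreal_rpow_half_sq])
  exact ENNReal.tsum_le_of_sum_range_le fun N ↦ le_self_add.trans (telescope N)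

section Schur

variable {α β : Type*} {v p : α → ℝ≥0∞} {w q : β → ℝ≥0∞} {K : α → β → ℝ≥0∞} {A B : ℝ≥0∞}

theorem tsum_sq_mul_le_of_schur (hp₀ : ∀ a, p a ≠ 0) (hp : ∀ a, p a ≠ ⊤)
    (hpq : ∀ b, ∑' a, K a b * (p a * v a) ≤ A * q b)
    (hqp : ∀ a, ∑' b, K a b * (q b * w b) ≤ B * p a) (f : α → ℝ≥0∞) :
    ∑' b, (∑' a, K a b * (f a * v a)) ^ 2 * w b ≤ A * B * ∑' a, f a ^ 2 * v a := by
  have cauchySchwarz (b : β) : (∑' a, K a b * (f a * v a)) ^ 2 ≤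
      (∑' a, K a b * (f a ^ 2 * (p a)⁻¹ * v a)) * ∑' a, K a b * (p a * v a) := by
    refine ennreal_tsum_sq_le_tsum_mul_tsum fun a ↦ le_of_eq ?_
    calc (K a b * (f a * v a)) ^ 2
        = (K a b * (f a * v a)) ^ 2 * ((p a)⁻¹ * p a) := by
          rw [ENNReal.inv_mul_cancel (hp₀ a) (hp a), mul_one]
      _ = _ := by ring
  calc ∑' b, (∑' a, K a b * (f a * v a)) ^ 2 * w b
      ≤ ∑' b, (∑' a, K a b * (f a ^ 2 * (p a)⁻¹ * v a)) * (A * q b) * w b := by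
        gcongr with b
        exact (cauchySchwarz b).trans (by gcongr; exact hpq b)
    _ = ∑' b, ∑' a, A * (f a ^ 2 * (p a)⁻¹ * v a) * (K a b * (q b * w b)) := by
        simp only [← ENNReal.tsum_mul_right]
        congr! 4
        ring
    _ = ∑' a, A * (f a ^ 2 * (p a)⁻¹ * v a) * ∑' b, K a b * (q b * w b) := by
        rw [ENNReal.tsum_comm]
        simp only [ENNReal.tsum_mul_left]
    _ ≤ ∑' a, A * (f a ^ 2 * (p a)⁻¹ * v a) * (B * p a) := by
        gcongr with a
        exact hqp a
    _ = ∑' a, A * B * (f a ^ 2 * v a) := by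
        congr! 2 with a
        calc _ = A * B * (f a ^ 2 * v a) * ((p a)⁻¹ * p a) := by ring
          _ = _ := by rw [ENNReal.inv_mul_cancel (hp₀ a) (hp a), mul_one]
    _ = A * B * ∑' a, f a ^ 2 * v a := ENNReal.tsum_mul_left

end Schur

theorem tsum_ite_le_eq_sum_range (f : ℕ → ℝ≥0∞) (n : ℕ) :
    ∑' m, (if m ≤ n then 1 else 0) * f m = ∑ m ∈ Finset.range (n + 1), f m := by
  rw [tsum_eq_sum (s := Finset.range (n + 1)) (by simp +contextual)]
  exact Finset.sum_congr rfl (by simp +contextual)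

theorem tsum_ite_ge_eq_tsum_add (f : ℕ → ℝ≥0∞) (m : ℕ) :
    ∑' n, (if m ≤ n then 1 else 0) * f n = ∑' k, f (m + k) := by
  rw [← ENNReal.summable.sum_add_tsum_nat_add' (k := m), Finset.sum_eq_zero]
  · simp [add_comm]
  · simp +contextual [Nat.not_le_of_lt]

theorem ennreal_rpow_half_mul_le {x y B u : ℝ≥0∞} (hB : B ≠ ⊤) (hxy : x * y ≤ B)
    (hu : y = 0 → u = 0) :
    x ^ (1 / 2 : ℝ) * u ≤ B ^ (1 / 2 : ℝ) * (u * (y ^ (1 / 2 : ℝ))⁻¹) := by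
  rcases eq_or_ne y 0 with hy | hy
  · simp [hu hy]
  calc x ^ (1 / 2 : ℝ) * u ≤ B ^ (1 / 2 : ℝ) / y ^ (1 / 2 : ℝ) * u := by
        gcongr
        rw [ENNReal.le_div_iff_mul_le (by simp [hy]) (by simp [hB]),
          ← ENNReal.mul_rpow_of_nonneg _ _ one_half_pos.le]
        gcongr
    _ = B ^ (1 / 2 : ℝ) * (u * (y ^ (1 / 2 : ℝ))⁻¹) := by
        rw [div_eq_mul_inv]
        ring

theorem tsum_rpow_half_mul_le {ι : Type*} {u x y : ι → ℝ≥0∞} {x₀ y₀ B : ℝ≥0∞}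
    (hxy : ∀ i, x i * y i ≤ B) (hxy₀ : x₀ * y₀ ≤ B) (hu : ∀ i, y i = 0 → u i = 0)
    (hx₀ : x₀ ≠ 0) (hx₀' : x₀ ≠ ⊤)
    (hsum : ∑' i, u i * (y i ^ (1 / 2 : ℝ))⁻¹ ≤ 2 * y₀ ^ (1 / 2 : ℝ)) :
    ∑' i, x i ^ (1 / 2 : ℝ) * u i ≤ 2 * B * (x₀ ^ (1 / 2 : ℝ))⁻¹ := by
  rcases eq_or_ne B ⊤ with rfl | hB
  · simp [ENNReal.mul_top, ENNReal.top_mul, hx₀']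
  calc ∑' i, x i ^ (1 / 2 : ℝ) * u i
      ≤ ∑' i, B ^ (1 / 2 : ℝ) * (u i * (y i ^ (1 / 2 : ℝ))⁻¹) :=
        ENNReal.tsum_le_tsum fun i ↦ ennreal_rpow_half_mul_le hB (hxy i) (hu i)
    _ ≤ B ^ (1 / 2 : ℝ) * (2 * y₀ ^ (1 / 2 : ℝ)) := by
        rw [ENNReal.tsum_mul_left]
        gcongr
    _ ≤ B ^ (1 / 2 : ℝ) * (2 * (B ^ (1 / 2 : ℝ) * (x₀ ^ (1 / 2 : ℝ))⁻¹)) := by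
        gcongr
        simpa using ennreal_rpow_half_mul_le (x := y₀) (y := x₀) (u := 1) hB
          (by rwa [mul_comm]) (by simp [hx₀])
    _ = 2 * B * (x₀ ^ (1 / 2 : ℝ))⁻¹ := by
        conv_rhs => rw [← ennreal_rpow_half_sq B]
        ring

section Hardy

variable {v w : ℕ → ℝ≥0∞} {B : ℝ≥0∞}

-- Muckenhoupt's weights: with `V n = ∑_{m ≤ n} v m`, the sequences `V^{-1/2}` and `V^{1/2}` are
-- Schur weights for the Hardy operator, with constants `2` and `2 B`.
theorem tsum_sum_range_mul_sq_le (hv₀ : v 0 ≠ 0) (hv : ∀ n, v n ≠ ⊤)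
    (hB : ∀ n, (∑ m ∈ Finset.range (n + 1), v m) * ∑' k, w (n + k) ≤ B) (f : ℕ → ℝ≥0∞) :
    ∑' n, (∑ m ∈ Finset.range (n + 1), f m * v m) ^ 2 * w n ≤ 4 * B * ∑' n, f n ^ 2 * v n := by
  let V : ℕ → ℝ≥0∞ := fun n ↦ ∑ m ∈ Finset.range (n + 1), v m
  have hV₀ (n : ℕ) : V n ≠ 0 := by simpa [V, Finset.sum_eq_zero_iff] using ⟨0, by simp, hv₀⟩
  have hV (n : ℕ) : V n ≠ ⊤ := ENNReal.sum_ne_top.2 fun m _ ↦ hv m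
  have schur := tsum_sq_mul_le_of_schur (A := 2) (B := 2 * B) (v := v) (w := w)
    (p := fun m ↦ (V m ^ (1 / 2 : ℝ))⁻¹) (q := fun n ↦ V n ^ (1 / 2 : ℝ))
    (K := fun m n ↦ if m ≤ n then 1 else 0) (by simp [hV]) (by simp [hV₀]) ?_ ?_ f
  · simpa only [tsum_ite_le_eq_sum_range, show 2 * (2 * B) = 4 * B by ring] using schur
  · intro n
    rw [tsum_ite_le_eq_sum_range]
    simpa only [mul_comm] using sum_range_mul_rpow_half_inv_le v (n + 1)
  · intro m
    rw [tsum_ite_ge_eq_tsum_add]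
    refine tsum_rpow_half_mul_le (y := fun k ↦ ∑' j, w (m + k + j)) (fun k ↦ hB (m + k)) (hB m)
      (fun k hk ↦ ?_) (hV₀ m) (hV m) ?_
    · simpa using ENNReal.tsum_eq_zero.1 hk 0
    · simpa only [add_assoc] using tsum_mul_rpow_half_inv_le fun k ↦ w (m + k)

theorem tsum_tsum_add_mul_sq_le (hw₀ : ∀ n, ∑' k, w (n + k) ≠ 0) (hw : ∑' n, w n ≠ ⊤)
    (hB : ∀ n, (∑ m ∈ Finset.range (n + 1), v m) * ∑' k, w (n + k) ≤ B) (f : ℕ → ℝ≥0∞) :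
    ∑' n, (∑' k, f (n + k) * w (n + k)) ^ 2 * v n ≤ 4 * B * ∑' n, f n ^ 2 * w n := by
  let W : ℕ → ℝ≥0∞ := fun n ↦ ∑' k, w (n + k)
  have hW (n : ℕ) : W n ≠ ⊤ :=
    ne_top_of_le_ne_top hw (ENNReal.tsum_comp_le_tsum_of_injective (add_right_injective n) w)
  have schur := tsum_sq_mul_le_of_schur (A := 2) (B := 2 * B) (v := w) (w := v)
    (p := fun m ↦ (W m ^ (1 / 2 : ℝ))⁻¹) (q := fun n ↦ W n ^ (1 / 2 : ℝ))
    (K := fun m n ↦ if n ≤ m then 1 else 0) (by simp [hW]) (by simp [W, hw₀]) ?_ ?_ f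
  · simpa only [tsum_ite_ge_eq_tsum_add, show 2 * (2 * B) = 4 * B by ring] using schur
  · intro n
    rw [tsum_ite_ge_eq_tsum_add]
    simpa only [W, mul_comm, add_assoc] using tsum_mul_rpow_half_inv_le fun k ↦ w (n + k)
  · intro m
    rw [tsum_ite_le_eq_sum_range, ← Finset.tsum_subtype]
    refine tsum_rpow_half_mul_le
      (y := fun n : Finset.range (m + 1) ↦ ∑ j ∈ Finset.range (n + 1), v j)
      (fun n ↦ (mul_comm _ _).trans_le (hB n)) ((mul_comm _ _).trans_le (hB m))
      (fun n hn ↦ ?_) (hw₀ m) (hW m) ?_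
    · exact Finset.sum_eq_zero_iff.1 hn n (by simp)
    · rw [Finset.tsum_subtype (Finset.range (m + 1)) fun n ↦
        v n * ((∑ j ∈ Finset.range (n + 1), v j) ^ (1 / 2 : ℝ))⁻¹]
      exact sum_range_mul_rpow_half_inv_le v (m + 1)

end Hardy

theorem half_le_re_div_sub {w z : ℂ} (h : ‖w‖ < ‖z‖) : 1 / 2 ≤ (z / (z - w)).re := by
  have hne : z - w ≠ 0 := sub_ne_zero.2 fun hzw ↦ h.ne' (by rw [hzw])
  have hpos : 0 < Complex.normSq (z - w) := Complex.normSq_pos.2 hne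
  have hsq : Complex.normSq w ≤ Complex.normSq z := by
    rw [Complex.normSq_eq_norm_sq, Complex.normSq_eq_norm_sq]
    gcongr
  rw [Complex.div_re, ← add_div, le_div_iff₀ hpos]
  simp only [Complex.normSq_apply, Complex.sub_re, Complex.sub_im] at hsq ⊢
  linarith

theorem norm_inv_sub_le {𝕜 : Type*} [NormedField 𝕜] {x y : 𝕜} {q : ℝ} (hq : q < 1)
    (h : ‖x‖ ≤ q * ‖y‖) : ‖(y - x)⁻¹‖ ≤ (1 - q)⁻¹ * ‖y⁻¹‖ := by
  rcases eq_or_ne y 0 with rfl | hy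
  · have hx : x = 0 := by simpa using h
    simp [hx]
  rw [norm_inv, norm_inv, ← mul_inv]
  have hy' : 0 < ‖y‖ := norm_pos_iff.2 hy
  exact inv_anti₀ (mul_pos (sub_pos.2 hq) hy') (by linarith [norm_sub_norm_le y x])

section Shells

variable {γ : ℕ → ℂ}

theorem Sparse.monotone_norm (hs : Sparse γ) : Monotone fun n ↦ ‖γ n‖ := by
  obtain ⟨c, hc, hγ⟩ := hs
  exact monotone_nat_of_le_succ fun n ↦
    (le_mul_of_one_le_left (norm_nonneg _) hc.le).trans (hγ n)

theorem Sparse.tendsto_norm_atTop (hs : Sparse γ) (h₀ : γ 0 ≠ 0) :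
    Tendsto (fun n ↦ ‖γ n‖) atTop atTop := by
  obtain ⟨c, hc, hγ⟩ := hs
  refine tendsto_atTop_mono (f := fun n ↦ c ^ n * ‖γ 0‖) (fun n ↦ ?_)
    ((tendsto_pow_atTop_atTop_of_one_lt hc).atTop_mul_const (norm_pos_iff.2 h₀))
  induction n with
  | zero => simp
  | succ n ih =>
    calc c ^ (n + 1) * ‖γ 0‖ = c * (c ^ n * ‖γ 0‖) := by ring
      _ ≤ c * ‖γ n‖ := by gcongr
      _ ≤ ‖γ (n + 1)‖ := hγ n

theorem measurableSet_Omega (γ : ℕ → ℂ) : ∀ n, MeasurableSet (Omega γ n)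
  | 0 => measurableSet_lt measurable_norm measurable_const
  | _ + 1 => (measurableSet_le measurable_const measurable_norm).inter
      (measurableSet_lt measurable_norm measurable_const)

theorem norm_lt_of_mem_Omega {n : ℕ} {z : ℂ} (hz : z ∈ Omega γ n) :
    ‖z‖ < (‖γ n‖ + ‖γ (n + 1)‖) / 2 := by
  cases n with
  | zero => exact hz
  | succ n => exact hz.2

theorem le_norm_of_mem_Omega (hmono : Monotone fun n ↦ ‖γ n‖) {m n : ℕ} {z : ℂ}
    (hz : z ∈ Omega γ n) (hmn : m < n) : (‖γ m‖ + ‖γ (m + 1)‖) / 2 ≤ ‖z‖ := by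
  obtain ⟨n, rfl⟩ := Nat.exists_eq_succ_of_ne_zero (Nat.ne_zero_of_lt hmn)
  have h₁ : ‖γ m‖ ≤ ‖γ n‖ := hmono (Nat.lt_succ_iff.1 hmn)
  have h₂ : ‖γ (m + 1)‖ ≤ ‖γ (n + 1)‖ := hmono (Nat.succ_le_of_lt hmn)
  exact (by linarith : _ ≤ (‖γ n‖ + ‖γ (n + 1)‖) / 2).trans hz.1

theorem pairwise_disjoint_Omega (hmono : Monotone fun n ↦ ‖γ n‖) :
    Pairwise (Function.onFun Disjoint (Omega γ)) := by
  refine (pairwise_disjoint_on _).2 fun m n hmn ↦ Set.disjoint_left.2 fun z hm hn ↦ ?_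
  exact (norm_lt_of_mem_Omega hm).not_ge (le_norm_of_mem_Omega hmono hn hmn)

theorem iUnion_Omega (hγ : Tendsto (fun n ↦ ‖γ n‖) atTop atTop) : ⋃ n, Omega γ n = Set.univ := by
  refine Set.eq_univ_of_forall fun z ↦ Set.mem_iUnion.2 ?_
  have hex : ∃ n, ‖z‖ < (‖γ n‖ + ‖γ (n + 1)‖) / 2 := by
    obtain ⟨N, hN⟩ := (hγ.eventually_gt_atTop (2 * ‖z‖)).exists
    exact ⟨N, by linarith [norm_nonneg (γ (N + 1))]⟩
  classical
  refine ⟨Nat.find hex, ?_⟩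
  cases hn : Nat.find hex with
  | zero => exact (Nat.find_eq_zero hex).1 hn
  | succ n =>
    have hspec := Nat.find_spec hex
    rw [hn] at hspec
    exact ⟨not_lt.1 (Nat.find_min hex (by lia)), hspec⟩

theorem norm_lt_norm_of_mem_Omega_of_lt (hs : Sparse γ) (hγ : ∀ n, γ n ≠ 0) {m n : ℕ} {z : ℂ}
    (hz : z ∈ Omega γ n) (hmn : m < n) : ‖γ m‖ < ‖z‖ := by
  have hlow := le_norm_of_mem_Omega hs.monotone_norm hz hmn
  obtain ⟨c, hc, hγc⟩ := hs
  have hpos : 0 < ‖γ m‖ := norm_pos_iff.2 (hγ m)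
  nlinarith [hγc m]

theorem norm_lt_norm_of_mem_Omega_of_gt (hs : Sparse γ) {m n : ℕ} {z : ℂ}
    (hz : z ∈ Omega γ n) (hnm : n < m) : ‖z‖ < ‖γ m‖ := by
  have hup := norm_lt_of_mem_Omega hz
  have h₁ : ‖γ n‖ ≤ ‖γ m‖ := hs.monotone_norm hnm.le
  have h₂ : ‖γ (n + 1)‖ ≤ ‖γ m‖ := hs.monotone_norm hnm
  linarith

theorem Sparse.exists_norm_le_mul (hs : Sparse γ) : ∃ q < 1, ∀ m n z, z ∈ Omega γ n →
    (m < n → ‖γ m‖ ≤ q * ‖z‖) ∧ (n < m → ‖z‖ ≤ q * ‖γ m‖) := by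
  have hmono := hs.monotone_norm
  obtain ⟨c, hc, hγ⟩ := hs
  refine ⟨(1 + c) / (2 * c), (div_lt_one (by positivity)).2 (by linarith),
    fun m n z hz ↦ ⟨fun hmn ↦ ?_, fun hnm ↦ ?_⟩⟩
  · have hlow := le_norm_of_mem_Omega hmono hz hmn
    have hmz : (1 + c) * ‖γ m‖ ≤ 2 * ‖z‖ := by linarith [hγ m]
    rw [div_mul_eq_mul_div, le_div_iff₀ (by positivity)]
    nlinarith [mul_le_mul_of_nonneg_left hmz (by positivity : 0 ≤ 1 + c),
      mul_nonneg (sq_nonneg (c - 1)) (norm_nonneg (γ m))]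
  · have hup := norm_lt_of_mem_Omega hz
    have hm : ‖γ (n + 1)‖ ≤ ‖γ m‖ := hmono hnm
    rw [div_mul_eq_mul_div, le_div_iff₀ (by positivity)]
    nlinarith [hγ n]

theorem Sparse.exists_enorm_inv_sub_le (hs : Sparse γ) : ∃ D : ℝ≥0∞, D ≠ ⊤ ∧
    ∀ m n z, z ∈ Omega γ n → (m < n → ‖(z - γ m)⁻¹‖ₑ ≤ D * ‖z⁻¹‖ₑ) ∧
      (n < m → ‖(z - γ m)⁻¹‖ₑ ≤ D * ‖(γ m)⁻¹‖ₑ) := by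
  obtain ⟨q, hq, hfar⟩ := hs.exists_norm_le_mul
  have henorm {x y : ℂ} (h : ‖x‖ ≤ q * ‖y‖) :
      ‖(y - x)⁻¹‖ₑ ≤ ENNReal.ofReal (1 - q)⁻¹ * ‖y⁻¹‖ₑ := by
    rw [← ofReal_norm, ← ofReal_norm,
      ← ENNReal.ofReal_mul (inv_nonneg.2 (sub_pos.2 hq).le)]
    exact ENNReal.ofReal_le_ofReal (norm_inv_sub_le hq h)
  refine ⟨ENNReal.ofReal (1 - q)⁻¹, ENNReal.ofReal_ne_top, fun m n z hz ↦
    ⟨fun hmn ↦ henorm ((hfar m n z hz).1 hmn), fun hnm ↦ ?_⟩⟩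
  rw [← neg_sub, inv_neg, enorm_neg]
  exact henorm ((hfar m n z hz).2 hnm)

end Shells

theorem enorm_complex_ofReal_of_nonneg {x : ℝ} (hx : 0 ≤ x) : ‖(x : ℂ)‖ₑ = ENNReal.ofReal x := by
  rw [← ofReal_norm, Complex.norm_of_nonneg hx]

theorem ofReal_div_norm_sq {𝕜 : Type*} [NormedField 𝕜] {x : ℝ} (hx : 0 ≤ x) (y : 𝕜) :
    ENNReal.ofReal (x / ‖y‖ ^ 2) = ENNReal.ofReal x * ‖y⁻¹‖ₑ ^ 2 := by
  rw [div_eq_mul_inv, ← inv_pow, ← norm_inv, ENNReal.ofReal_mul hx,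
    ENNReal.ofReal_pow (norm_nonneg _), ofReal_norm]

/-- The squared norm of `ℓ²_v` with values in `ℝ≥0∞`, so that it is infinite outside `ℓ²_v`. -/
def enormSqV (v : ℕ → ℝ) (a : ℕ → ℂ) : ℝ≥0∞ := ∑' n, ‖a n‖ₑ ^ 2 * ENNReal.ofReal (v n)

/-- The Carleson inequality `∫ |f|² dμ ≤ C ‖a‖²_v` with the given constant. It is required of all
sequences `a`, being void where `‖a‖²_v = ∞` if `C ≠ 0`. -/
def IsCarlesonBound (γ : ℕ → ℂ) (v : ℕ → ℝ) (μ : Measure ℂ) (C : ℝ≥0∞) : Prop :=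
  ∀ a : ℕ → ℂ, ∫⁻ z, ‖Hfun γ v a z‖ₑ ^ 2 ∂μ ≤ C * enormSqV v a

section CarlesonBound

variable {γ : ℕ → ℂ} {v : ℕ → ℝ} {a : ℕ → ℂ} {μ : Measure ℂ} {C : ℝ≥0∞}

theorem enormSqV_eq_tsum_ofReal (v : ℕ → ℝ) (a : ℕ → ℂ) :
    enormSqV v a = ∑' n, ENNReal.ofReal (‖a n‖ ^ 2 * v n) :=
  tsum_congr fun n ↦ by
    rw [ENNReal.ofReal_mul (by positivity), ENNReal.ofReal_pow (norm_nonneg _), ofReal_norm]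

theorem memL2v_iff_enormSqV_ne_top (hv : ∀ n, 0 ≤ v n) : MemL2v v a ↔ enormSqV v a ≠ ⊤ := by
  rw [enormSqV_eq_tsum_ofReal]
  refine ⟨Summable.tsum_ofReal_ne_top, fun h ↦ ?_⟩
  simpa only [MemL2v, ENNReal.toReal_ofReal (mul_nonneg (sq_nonneg _) (hv _))] using
    ENNReal.summable_toReal h

theorem MemL2v.ofReal_normSqV (hv : ∀ n, 0 ≤ v n) (ha : MemL2v v a) :
    ENNReal.ofReal (normSqV v a) = enormSqV v a := by
  rw [enormSqV_eq_tsum_ofReal, normSqV,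
    ENNReal.ofReal_tsum_of_nonneg (fun n ↦ mul_nonneg (sq_nonneg _) (hv n)) ha]

theorem isCarleson_iff_exists_isCarlesonBound (hv : ∀ n, 0 ≤ v n) :
    IsCarleson γ v μ ↔ ∃ C ≠ ⊤, IsCarlesonBound γ v μ C := by
  constructor
  · rintro ⟨C, hC, h⟩
    refine ⟨ENNReal.ofReal C, ENNReal.ofReal_ne_top, fun a ↦ ?_⟩
    by_cases ha : MemL2v v a
    · rw [← ha.ofReal_normSqV hv, ← ENNReal.ofReal_mul hC.le]
      exact h a ha
    · rw [not_not.1 (mt (memL2v_iff_enormSqV_ne_top hv).2 ha),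
        ENNReal.mul_top (ENNReal.ofReal_pos.2 hC).ne']
      exact le_top
  · rintro ⟨C, hC, h⟩
    refine ⟨C.toReal + 1, by positivity, fun a ha ↦ (h a).trans ?_⟩
    rw [ENNReal.ofReal_mul (by positivity), ha.ofReal_normSqV hv]
    gcongr
    exact (ENNReal.ofReal_toReal hC).symm.trans_le (ENNReal.ofReal_le_ofReal (by simp))

theorem Admissible.summable_div_norm_sq (hadm : Admissible γ v) (hv : ∀ n, 0 ≤ v n)
    (h₀ : γ 0 ≠ 0) (hmono : Monotone fun n ↦ ‖γ n‖) : Summable fun n ↦ v n / ‖γ n‖ ^ 2 := by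
  have hγ (n : ℕ) : 0 < ‖γ n‖ := (norm_pos_iff.2 h₀).trans_le (hmono n.zero_le)
  refine (hadm.mul_left ((‖γ 0‖ ^ 2)⁻¹ + 1)).of_nonneg_of_le
    (fun n ↦ div_nonneg (hv n) (sq_nonneg _)) fun n ↦ ?_
  have hn : ‖γ 0‖ ^ 2 ≤ ‖γ n‖ ^ 2 := by
    gcongr
    exact hmono n.zero_le
  have hkey : 1 + ‖γ n‖ ^ 2 ≤ ((‖γ 0‖ ^ 2)⁻¹ + 1) * ‖γ n‖ ^ 2 := by
    have := (one_le_inv_mul₀ (pow_pos (hγ 0) 2)).2 hn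
    linarith
  have := hγ n
  rw [mul_div_assoc', div_le_div_iff₀ (by positivity) (by positivity)]
  linarith [mul_le_mul_of_nonneg_left hkey (hv n)]

theorem tsum_ofReal_mul_enorm_inv_sq_ne_top (hv : ∀ n, 0 ≤ v n)
    (hsum : Summable fun n ↦ v n / ‖γ n‖ ^ 2) :
    ∑' n, ENNReal.ofReal (v n) * ‖(γ n)⁻¹‖ₑ ^ 2 ≠ ⊤ := by
  simpa only [ofReal_div_norm_sq (hv _)] using hsum.tsum_ofReal_ne_top

theorem localTerm_eq_mul_lintegral (hv : ∀ n, 0 ≤ v n) (n : ℕ) :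
    localTerm γ v μ n = ENNReal.ofReal (v n) * ∫⁻ z in Omega γ n, ‖(z - γ n)⁻¹‖ₑ ^ 2 ∂μ := by
  simp only [localTerm, ofReal_div_norm_sq (hv n)]
  exact lintegral_const_mul' _ _ ENNReal.ofReal_ne_top

theorem globalTerm_eq_enorm (hv : ∀ n, 0 ≤ v n) (hsum : Summable fun n ↦ v n / ‖γ n‖ ^ 2)
    (n : ℕ) : globalTerm γ v μ n =
      (∑ m ∈ Finset.range (n + 1), ENNReal.ofReal (v m)) *
          ∑' k, ∫⁻ z in Omega γ (n + k + 1), ‖z⁻¹‖ₑ ^ 2 ∂μ +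
        (∑' k, ENNReal.ofReal (v (n + k + 1)) * ‖(γ (n + k + 1))⁻¹‖ₑ ^ 2) *
          ∑ m ∈ Finset.range (n + 1), μ (Omega γ m) := by
  rw [globalTerm, ENNReal.ofReal_sum_of_nonneg fun m _ ↦ hv m, ENNReal.ofReal_tsum_of_nonneg
    (fun k ↦ div_nonneg (hv _) (sq_nonneg _)) (hsum.comp_injective (add_right_injective (n + 1)))]
  simp only [ofReal_div_norm_sq zero_le_one, ofReal_div_norm_sq (hv _), ENNReal.ofReal_one, one_mul,
    add_right_comm n 1]

end CarlesonBound

section Necessity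

variable {γ : ℕ → ℂ} {v : ℕ → ℝ} {a : ℕ → ℂ} {μ : Measure ℂ} {C : ℝ≥0∞}

theorem IsCarlesonBound.enormSqV_mul_lintegral_le (h : IsCarlesonBound γ v μ C)
    (ha : enormSqV v a ≠ ⊤) {K : ℝ≥0∞} (hK : K ≠ ⊤) {s : Set ℂ} (hs : MeasurableSet s)
    {g : ℂ → ℝ≥0∞} (hg : ∀ z ∈ s, enormSqV v a * g z ≤ K * ‖Hfun γ v a z‖ₑ) :
    enormSqV v a * ∫⁻ z in s, g z ^ 2 ∂μ ≤ K ^ 2 * C := by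
  rcases eq_or_ne (enormSqV v a) 0 with ha₀ | ha₀
  · simp [ha₀]
  refine (ENNReal.mul_le_mul_iff_right ha₀ ha).1 ?_
  calc enormSqV v a * (enormSqV v a * ∫⁻ z in s, g z ^ 2 ∂μ)
      = ∫⁻ z in s, (enormSqV v a * g z) ^ 2 ∂μ := by
        simp only [mul_pow]
        rw [lintegral_const_mul' _ _ (by finiteness)]
        ring
    _ ≤ ∫⁻ z in s, K ^ 2 * ‖Hfun γ v a z‖ₑ ^ 2 ∂μ :=
        setLIntegral_mono' hs fun z hz ↦ by
          rw [← mul_pow]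
          exact pow_le_pow_left' (hg z hz) 2
    _ ≤ K ^ 2 * (C * enormSqV v a) := by
        rw [lintegral_const_mul' _ _ (by finiteness)]
        gcongr
        exact (setLIntegral_le_lintegral s _).trans (h a)
    _ = enormSqV v a * (K ^ 2 * C) := by ring

theorem IsCarlesonBound.localTerm_le (h : IsCarlesonBound γ v μ C) (hv : ∀ n, 0 ≤ v n) (n : ℕ) :
    localTerm γ v μ n ≤ C := by
  have hnorm : enormSqV v (Pi.single n 1) = ENNReal.ofReal (v n) := by
    rw [enormSqV, tsum_eq_single n (by simp +contextual)]
    simp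
  have hH (z : ℂ) : Hfun γ v (Pi.single n 1) z = v n * (z - γ n)⁻¹ := by
    rw [Hfun, tsum_eq_single n (by simp +contextual), Pi.single_eq_same, one_mul, div_eq_mul_inv]
  have key := h.enormSqV_mul_lintegral_le (a := Pi.single n 1) (K := 1)
    (g := fun z ↦ ‖(z - γ n)⁻¹‖ₑ) (by simp [hnorm]) ENNReal.one_ne_top
    (measurableSet_Omega γ n) fun z _ ↦ ?_
  · simpa only [localTerm_eq_mul_lintegral hv, hnorm, one_pow, one_mul] using key
  · rw [hnorm, hH, one_mul, enorm_mul, enorm_complex_ofReal_of_nonneg (hv n)]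

theorem enormSqV_le_two_mul_enorm_Hfun (hv : ∀ n, 0 ≤ v n) {z ζ : ℂ}
    (hsum : Summable fun n ↦ a n * v n / (z - γ n))
    (hre : ∀ n, ‖a n‖ ^ 2 * v n ≤ 2 * (ζ * (a n * v n / (z - γ n))).re) :
    enormSqV v a ≤ 2 * (‖ζ‖ₑ * ‖Hfun γ v a z‖ₑ) := by
  have hHfun : HasSum (fun n ↦ (ζ * (a n * v n / (z - γ n))).re) (ζ * Hfun γ v a z).re :=
    Complex.hasSum_re (hsum.hasSum.mul_left ζ)
  have hnonneg (n : ℕ) : 0 ≤ (ζ * (a n * v n / (z - γ n))).re := by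
    linarith [hre n, mul_nonneg (sq_nonneg ‖a n‖) (hv n)]
  calc enormSqV v a ≤ ∑' n, ENNReal.ofReal (2 * (ζ * (a n * v n / (z - γ n))).re) := by
        rw [enormSqV_eq_tsum_ofReal]
        exact ENNReal.tsum_le_tsum fun n ↦ ENNReal.ofReal_le_ofReal (hre n)
    _ = 2 * ENNReal.ofReal (ζ * Hfun γ v a z).re := by
        simp only [ENNReal.ofReal_mul zero_le_two, ENNReal.tsum_mul_left, ENNReal.ofReal_ofNat]
        rw [← hHfun.tsum_eq, ENNReal.ofReal_tsum_of_nonneg hnonneg hHfun.summable]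
    _ ≤ 2 * (‖ζ‖ₑ * ‖Hfun γ v a z‖ₑ) := by
        rw [← enorm_mul, ← ofReal_norm]
        gcongr
        exact Complex.re_le_norm _

theorem le_two_mul_re_mul_div {x : ℝ} {w z : ℂ} (hx : 0 ≤ x) (h : ‖w‖ < ‖z‖) :
    x ≤ 2 * (x * (z / (z - w))).re := by
  rw [Complex.re_ofReal_mul]
  nlinarith [half_le_re_div_sub h]

/-- The test sequence `1_{m ≤ n}`, for which `z f(z)` has all its terms in the right half-plane
when `z` lies outside the discs of radius `|γ_m|`, `m ≤ n`. -/
def initialTest (n : ℕ) : ℕ → ℂ := fun m ↦ if m ≤ n then 1 else 0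

/-- The test sequence `1_{m > n} / conj γ_m`, for which `-f(z)` has all its terms in the right
half-plane when `z` lies inside the discs of radius `|γ_m|`, `m > n`. -/
def tailTest (γ : ℕ → ℂ) (n : ℕ) : ℕ → ℂ :=
  fun m ↦ if n + 1 ≤ m then (starRingEnd ℂ (γ m))⁻¹ else 0

theorem enormSqV_initialTest (v : ℕ → ℝ) (n : ℕ) :
    enormSqV v (initialTest n) = ∑ m ∈ Finset.range (n + 1), ENNReal.ofReal (v m) := by
  rw [← tsum_ite_le_eq_sum_range]
  refine tsum_congr fun m ↦ ?_
  by_cases hm : m ≤ n <;> simp [initialTest, hm]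

theorem enormSqV_tailTest (γ : ℕ → ℂ) (v : ℕ → ℝ) (n : ℕ) : enormSqV v (tailTest γ n) =
    ∑' k, ENNReal.ofReal (v (n + k + 1)) * ‖(γ (n + k + 1))⁻¹‖ₑ ^ 2 := by
  simp only [add_right_comm n _ 1]
  rw [← tsum_ite_ge_eq_tsum_add fun m ↦ ENNReal.ofReal (v m) * ‖(γ m)⁻¹‖ₑ ^ 2]
  refine tsum_congr fun m ↦ ?_
  by_cases hm : n + 1 ≤ m
  · simp [tailTest, hm, mul_comm, ← ofReal_norm]
  · simp [tailTest, hm]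

theorem enormSqV_initialTest_mul_enorm_inv_le (hv : ∀ n, 0 ≤ v n) {n : ℕ} {z : ℂ}
    (hz : ∀ m ≤ n, ‖γ m‖ < ‖z‖) :
    enormSqV v (initialTest n) * ‖z⁻¹‖ₑ ≤ 2 * ‖Hfun γ v (initialTest n) z‖ₑ := by
  have hz₀ : z ≠ 0 := norm_pos_iff.1 ((norm_nonneg _).trans_lt (hz 0 n.zero_le))
  have hle : enormSqV v (initialTest n) ≤ 2 * (‖z‖ₑ * ‖Hfun γ v (initialTest n) z‖ₑ) := by
    refine enormSqV_le_two_mul_enorm_Hfun hv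
      (summable_of_ne_finset_zero (s := Finset.range (n + 1)) fun m hm ↦ ?_) fun m ↦ ?_
    · simp [initialTest, show ¬m ≤ n by simpa using hm]
    · by_cases hm : m ≤ n
      · have hterm : z * (1 * v m / (z - γ m)) = v m * (z / (z - γ m)) := by ring
        rw [initialTest, if_pos hm, hterm, norm_one, one_pow, one_mul]
        exact le_two_mul_re_mul_div (hv m) (hz m hm)
      · simp [initialTest, hm]
  calc enormSqV v (initialTest n) * ‖z⁻¹‖ₑ
      ≤ 2 * (‖z‖ₑ * ‖Hfun γ v (initialTest n) z‖ₑ) * ‖z⁻¹‖ₑ := by gcongr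
    _ = 2 * ‖Hfun γ v (initialTest n) z‖ₑ * ‖z * z⁻¹‖ₑ := by
        rw [enorm_mul]
        ring
    _ = 2 * ‖Hfun γ v (initialTest n) z‖ₑ := by simp [hz₀]

theorem enormSqV_tailTest_le (hv : ∀ n, 0 ≤ v n) {n : ℕ} {z : ℂ}
    (hz : ∀ m, n < m → ‖z‖ < ‖γ m‖)
    (hsum : Summable fun m ↦ tailTest γ n m * v m / (z - γ m)) :
    enormSqV v (tailTest γ n) ≤ 2 * ‖Hfun γ v (tailTest γ n) z‖ₑ := by
  have hre (m : ℕ) : ‖tailTest γ n m‖ ^ 2 * v m ≤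
      2 * (-1 * (tailTest γ n m * v m / (z - γ m))).re := by
    by_cases hm : n + 1 ≤ m
    · have hterm : -1 * ((starRingEnd ℂ (γ m))⁻¹ * v m / (z - γ m)) =
          ((v m / ‖γ m‖ ^ 2 : ℝ) : ℂ) * (γ m / (γ m - z)) := by
        rw [← neg_sub (γ m) z, div_neg, Complex.inv_def, Complex.conj_conj, Complex.normSq_conj,
          Complex.normSq_eq_norm_sq]
        push_cast
        ring
      have hle := le_two_mul_re_mul_div (div_nonneg (hv m) (sq_nonneg ‖γ m‖)) (hz m hm)
      rw [tailTest, if_pos hm, hterm]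
      refine (le_of_eq ?_).trans hle
      rw [norm_inv, RCLike.norm_conj]
      ring
    · simp [tailTest, hm]
  simpa using enormSqV_le_two_mul_enorm_Hfun hv hsum hre

theorem summable_tailTest_mul_div {D : ℝ≥0∞} (hD : D ≠ ⊤)
    (hsum : Summable fun n ↦ v n / ‖γ n‖ ^ 2) (hv : ∀ n, 0 ≤ v n) {n : ℕ} {z : ℂ}
    (hz : ∀ m, n < m → ‖(z - γ m)⁻¹‖ₑ ≤ D * ‖(γ m)⁻¹‖ₑ) :
    Summable fun m ↦ tailTest γ n m * v m / (z - γ m) := by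
  refine .of_enorm (ne_top_of_le_ne_top
    (ENNReal.mul_ne_top hD (tsum_ofReal_mul_enorm_inv_sq_ne_top hv hsum)) ?_)
  rw [← ENNReal.tsum_mul_left]
  refine ENNReal.tsum_le_tsum fun m ↦ ?_
  by_cases hm : n + 1 ≤ m
  · have hconj : ‖(starRingEnd ℂ (γ m))⁻¹‖ₑ = ‖(γ m)⁻¹‖ₑ := by simp [← ofReal_norm]
    rw [tailTest, if_pos hm, div_eq_mul_inv, enorm_mul, enorm_mul, hconj,
      enorm_complex_ofReal_of_nonneg (hv m)]
    grw [hz m hm]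
    exact le_of_eq (by ring)
  · simp [tailTest, hm]

theorem IsCarlesonBound.sum_mul_tsum_lintegral_le (h : IsCarlesonBound γ v μ C) (hs : Sparse γ)
    (hγ : ∀ n, γ n ≠ 0) (hv : ∀ n, 0 ≤ v n) (n : ℕ) :
    (∑ m ∈ Finset.range (n + 1), ENNReal.ofReal (v m)) *
      ∑' k, ∫⁻ z in Omega γ (n + k + 1), ‖z⁻¹‖ₑ ^ 2 ∂μ ≤ 4 * C := by
  have hmeas (k : ℕ) := measurableSet_Omega γ (n + k + 1)
  have hdisj : Pairwise (Function.onFun Disjoint fun k ↦ Omega γ (n + k + 1)) :=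
    (pairwise_disjoint_Omega hs.monotone_norm).comp_of_injective fun i j hij ↦ by lia
  have hlower : ∀ z ∈ ⋃ k, Omega γ (n + k + 1),
      enormSqV v (initialTest n) * ‖z⁻¹‖ₑ ≤ 2 * ‖Hfun γ v (initialTest n) z‖ₑ := fun z hz ↦ by
    obtain ⟨k, hk⟩ := Set.mem_iUnion.1 hz
    exact enormSqV_initialTest_mul_enorm_inv_le hv fun m hm ↦
      norm_lt_norm_of_mem_Omega_of_lt hs hγ hk (by lia)
  have hfin : enormSqV v (initialTest n) ≠ ⊤ := by simp [enormSqV_initialTest]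
  rw [← enormSqV_initialTest, ← lintegral_iUnion hmeas hdisj, show (4 : ℝ≥0∞) = 2 ^ 2 by norm_num]
  exact h.enormSqV_mul_lintegral_le hfin ENNReal.ofNat_ne_top (.iUnion hmeas) hlower

theorem IsCarlesonBound.tsum_mul_sum_measure_le (h : IsCarlesonBound γ v μ C) (hs : Sparse γ)
    (hv : ∀ n, 0 ≤ v n) (hsum : Summable fun n ↦ v n / ‖γ n‖ ^ 2) (n : ℕ) :
    (∑' k, ENNReal.ofReal (v (n + k + 1)) * ‖(γ (n + k + 1))⁻¹‖ₑ ^ 2) *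
      ∑ m ∈ Finset.range (n + 1), μ (Omega γ m) ≤ 4 * C := by
  have hmeas (m : ℕ) := measurableSet_Omega γ m
  have hdisj := pairwise_disjoint_Omega hs.monotone_norm
  obtain ⟨D, hD, hfar⟩ := hs.exists_enorm_inv_sub_le
  have hlower : ∀ z ∈ ⋃ m ∈ Finset.range (n + 1), Omega γ m,
      enormSqV v (tailTest γ n) * 1 ≤ 2 * ‖Hfun γ v (tailTest γ n) z‖ₑ := fun z hz ↦ by
    obtain ⟨l, hl, hzl⟩ := Set.mem_iUnion₂.1 hz
    have hlt {m : ℕ} (hm : n < m) : l < m := (Finset.mem_range_succ_iff.1 hl).trans_lt hm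
    rw [mul_one]
    exact enormSqV_tailTest_le hv (fun m hm ↦ norm_lt_norm_of_mem_Omega_of_gt hs hzl (hlt hm))
      (summable_tailTest_mul_div hD hsum hv fun m hm ↦ (hfar m l z hzl).2 (hlt hm))
  have hfin : enormSqV v (tailTest γ n) ≠ ⊤ := by
    rw [enormSqV_tailTest]
    exact ne_top_of_le_ne_top (tsum_ofReal_mul_enorm_inv_sq_ne_top hv hsum)
      (ENNReal.tsum_comp_le_tsum_of_injective (fun i j hij ↦ by lia)
        fun m ↦ ENNReal.ofReal (v m) * ‖(γ m)⁻¹‖ₑ ^ 2)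
  have key := h.enormSqV_mul_lintegral_le hfin ENNReal.ofNat_ne_top
    (Finset.measurableSet_biUnion _ fun m _ ↦ hmeas m) hlower
  rw [← enormSqV_tailTest, ← measure_biUnion_finset (fun i _ j _ hij ↦ hdisj hij) fun m _ ↦ hmeas m,
    show (4 : ℝ≥0∞) = 2 ^ 2 by norm_num]
  simpa using key

theorem IsCarlesonBound.globalTerm_le (h : IsCarlesonBound γ v μ C) (hs : Sparse γ)
    (hγ : ∀ n, γ n ≠ 0) (hv : ∀ n, 0 ≤ v n) (hsum : Summable fun n ↦ v n / ‖γ n‖ ^ 2) (n : ℕ) :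
    globalTerm γ v μ n ≤ 8 * C := by
  rw [globalTerm_eq_enorm hv hsum, show 8 * C = 4 * C + 4 * C by ring]
  exact add_le_add (h.sum_mul_tsum_lintegral_le hs hγ hv n)
    (h.tsum_mul_sum_measure_le hs hv hsum n)

end Necessity

section Sufficiency

variable {γ : ℕ → ℂ} {v : ℕ → ℝ} {a : ℕ → ℂ} {μ : Measure ℂ} {D : ℝ≥0∞}

theorem enorm_Hfun_le_tsum (hv : ∀ n, 0 ≤ v n) (a : ℕ → ℂ) (z : ℂ) :
    ‖Hfun γ v a z‖ₑ ≤ ∑' m, ‖a m‖ₑ * ENNReal.ofReal (v m) * ‖(z - γ m)⁻¹‖ₑ := by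
  refine enorm_tsum_le_tsum_enorm.trans_eq (tsum_congr fun m ↦ ?_)
  rw [div_eq_mul_inv, enorm_mul, enorm_mul, enorm_complex_ofReal_of_nonneg (hv m)]

theorem enorm_Hfun_le_add (hv : ∀ n, 0 ≤ v n) (a : ℕ → ℂ) {n : ℕ} {z : ℂ}
    (hlow : ∀ m < n, ‖(z - γ m)⁻¹‖ₑ ≤ D * ‖z⁻¹‖ₑ)
    (hhigh : ∀ m, n < m → ‖(z - γ m)⁻¹‖ₑ ≤ D * ‖(γ m)⁻¹‖ₑ) :
    ‖Hfun γ v a z‖ₑ ≤ D * (∑ m ∈ Finset.range n, ‖a m‖ₑ * ENNReal.ofReal (v m)) * ‖z⁻¹‖ₑ +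
      ‖a n‖ₑ * ENNReal.ofReal (v n) * ‖(z - γ n)⁻¹‖ₑ +
      D * ∑' k, ‖a (n + k + 1)‖ₑ * ENNReal.ofReal (v (n + k + 1)) * ‖(γ (n + k + 1))⁻¹‖ₑ := by
  grw [enorm_Hfun_le_tsum hv, ← ENNReal.summable.sum_add_tsum_nat_add' (k := n + 1),
    Finset.sum_range_succ]
  gcongr ?_ + _ + ?_
  · rw [Finset.mul_sum, Finset.sum_mul]
    refine Finset.sum_le_sum fun m hm ↦ ?_
    grw [hlow m (Finset.mem_range.1 hm)]
    exact le_of_eq (by ring)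
  · rw [← ENNReal.tsum_mul_left]
    refine ENNReal.tsum_le_tsum fun k ↦ ?_
    rw [show k + (n + 1) = n + k + 1 by ring]
    grw [hhigh (n + k + 1) (by lia)]
    exact le_of_eq (by ring)

theorem setLIntegral_enorm_Hfun_sq_le (hv : ∀ n, 0 ≤ v n) (hD : D ≠ ⊤) (a : ℕ → ℂ) {n : ℕ}
    (hlow : ∀ m z, z ∈ Omega γ n → m < n → ‖(z - γ m)⁻¹‖ₑ ≤ D * ‖z⁻¹‖ₑ)
    (hhigh : ∀ m z, z ∈ Omega γ n → n < m → ‖(z - γ m)⁻¹‖ₑ ≤ D * ‖(γ m)⁻¹‖ₑ) :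
    ∫⁻ z in Omega γ n, ‖Hfun γ v a z‖ₑ ^ 2 ∂μ ≤
      3 * (D ^ 2 * ((∑ m ∈ Finset.range n, ‖a m‖ₑ * ENNReal.ofReal (v m)) ^ 2 *
          ∫⁻ z in Omega γ n, ‖z⁻¹‖ₑ ^ 2 ∂μ) +
        ‖a n‖ₑ ^ 2 * ENNReal.ofReal (v n) * localTerm γ v μ n +
        D ^ 2 * ((∑' k, ‖a (n + k + 1)‖ₑ * ENNReal.ofReal (v (n + k + 1)) *
          ‖(γ (n + k + 1))⁻¹‖ₑ) ^ 2 * μ (Omega γ n))) := by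
  set F := ∑ m ∈ Finset.range n, ‖a m‖ₑ * ENNReal.ofReal (v m)
  set G := ∑' k, ‖a (n + k + 1)‖ₑ * ENNReal.ofReal (v (n + k + 1)) * ‖(γ (n + k + 1))⁻¹‖ₑ
  have hF : F ≠ ⊤ := ENNReal.sum_ne_top.2 fun m _ ↦ by finiteness
  calc ∫⁻ z in Omega γ n, ‖Hfun γ v a z‖ₑ ^ 2 ∂μ
      ≤ ∫⁻ z in Omega γ n, 3 * ((D * F) ^ 2 * ‖z⁻¹‖ₑ ^ 2 +
          (‖a n‖ₑ * ENNReal.ofReal (v n)) ^ 2 * ‖(z - γ n)⁻¹‖ₑ ^ 2 + (D * G) ^ 2) ∂μ := by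
        refine setLIntegral_mono' (measurableSet_Omega γ n) fun z hz ↦ ?_
        grw [enorm_Hfun_le_add hv a (hlow · z hz) (hhigh · z hz), ennreal_add_add_sq_le]
        simp only [mul_pow, F, G, le_refl]
    _ = 3 * ((D * F) ^ 2 * ∫⁻ z in Omega γ n, ‖z⁻¹‖ₑ ^ 2 ∂μ +
          (‖a n‖ₑ * ENNReal.ofReal (v n)) ^ 2 * ∫⁻ z in Omega γ n, ‖(z - γ n)⁻¹‖ₑ ^ 2 ∂μ +
          (D * G) ^ 2 * μ (Omega γ n)) := by
        rw [lintegral_const_mul' _ _ (by finiteness), lintegral_add_left (by fun_prop),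
          lintegral_add_left (by fun_prop), lintegral_const_mul' _ _ (by finiteness),
          lintegral_const_mul' _ _ (by finiteness), setLIntegral_const]
    _ = _ := by
        rw [localTerm_eq_mul_lintegral hv]
        ring

theorem tsum_sum_range_sq_mul_lintegral_le (hv : ∀ n, 0 < v n)
    (hsum : Summable fun n ↦ v n / ‖γ n‖ ^ 2) {B : ℝ≥0∞} (hB : ∀ n, globalTerm γ v μ n ≤ B)
    (a : ℕ → ℂ) :
    ∑' n, (∑ m ∈ Finset.range n, ‖a m‖ₑ * ENNReal.ofReal (v m)) ^ 2 *
      ∫⁻ z in Omega γ n, ‖z⁻¹‖ₑ ^ 2 ∂μ ≤ 4 * B * enormSqV v a := by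
  have hB' (n : ℕ) : (∑ m ∈ Finset.range (n + 1), ENNReal.ofReal (v m)) *
      ∑' k, ∫⁻ z in Omega γ (n + k + 1), ‖z⁻¹‖ₑ ^ 2 ∂μ ≤ B :=
    le_self_add.trans ((globalTerm_eq_enorm (fun n ↦ (hv n).le) hsum n).symm.trans_le (hB n))
  rw [tsum_eq_zero_add' ENNReal.summable, Finset.range_zero, Finset.sum_empty,
    zero_pow two_ne_zero, zero_mul, zero_add]
  exact tsum_sum_range_mul_sq_le (by simpa using hv 0) (fun n ↦ ENNReal.ofReal_ne_top) hB' _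

theorem tsum_tsum_add_sq_mul_measure_le (hv : ∀ n, 0 < v n) (hγ : ∀ n, γ n ≠ 0)
    (hsum : Summable fun n ↦ v n / ‖γ n‖ ^ 2) {B : ℝ≥0∞} (hB : ∀ n, globalTerm γ v μ n ≤ B)
    (a : ℕ → ℂ) :
    ∑' n, (∑' k, ‖a (n + k + 1)‖ₑ * ENNReal.ofReal (v (n + k + 1)) * ‖(γ (n + k + 1))⁻¹‖ₑ) ^ 2 *
      μ (Omega γ n) ≤ 4 * B * enormSqV v a := by
  have hv' (n : ℕ) : 0 ≤ v n := (hv n).le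
  set t : ℕ → ℝ≥0∞ := fun n ↦ ENNReal.ofReal (v n) * ‖(γ n)⁻¹‖ₑ ^ 2
  have ht₀ (n : ℕ) : t n ≠ 0 := by simp [t, hv n, hγ n]
  have ht : ∑' n, t (n + 1) ≠ ⊤ :=
    ne_top_of_le_ne_top (tsum_ofReal_mul_enorm_inv_sq_ne_top hv' hsum)
      (ENNReal.tsum_comp_le_tsum_of_injective (add_left_injective 1) t)
  have hB' (n : ℕ) : (∑ m ∈ Finset.range (n + 1), μ (Omega γ m)) * ∑' k, t (n + k + 1) ≤ B := by
    rw [mul_comm]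
    exact le_add_self.trans ((globalTerm_eq_enorm hv' hsum n).symm.trans_le (hB n))
  have hcancel (n : ℕ) : ‖γ n‖ₑ * ‖(γ n)⁻¹‖ₑ = 1 := by
    rw [← enorm_mul, mul_inv_cancel₀ (hγ n), enorm_one]
  have hlin (n : ℕ) : ‖a n‖ₑ * ENNReal.ofReal (v n) * ‖(γ n)⁻¹‖ₑ = ‖a n‖ₑ * ‖γ n‖ₑ * t n := by
    calc _ = ‖a n‖ₑ * ENNReal.ofReal (v n) * ‖(γ n)⁻¹‖ₑ * (‖γ n‖ₑ * ‖(γ n)⁻¹‖ₑ) := by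
          rw [hcancel, mul_one]
      _ = _ := by ring
  have hsq (n : ℕ) : (‖a n‖ₑ * ‖γ n‖ₑ) ^ 2 * t n = ‖a n‖ₑ ^ 2 * ENNReal.ofReal (v n) := by
    calc _ = ‖a n‖ₑ ^ 2 * ENNReal.ofReal (v n) * (‖γ n‖ₑ * ‖(γ n)⁻¹‖ₑ) ^ 2 := by ring
      _ = _ := by rw [hcancel, one_pow, mul_one]
  simp only [hlin]
  grw [tsum_tsum_add_mul_sq_le (fun n h ↦ ht₀ (n + 0 + 1) (ENNReal.tsum_eq_zero.1 h 0)) ht hB'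
    fun n ↦ ‖a (n + 1)‖ₑ * ‖γ (n + 1)‖ₑ]
  simp only [hsq]
  gcongr
  exact ENNReal.tsum_comp_le_tsum_of_injective (add_left_injective 1) _

theorem isCarlesonBound_of_localTerm_le_of_globalTerm_le (hs : Sparse γ)
    (hγ : ∀ n, γ n ≠ 0) (hv : ∀ n, 0 < v n) (hsum : Summable fun n ↦ v n / ‖γ n‖ ^ 2)
    (hD : D ≠ ⊤) (hfar : ∀ m n z, z ∈ Omega γ n → (m < n → ‖(z - γ m)⁻¹‖ₑ ≤ D * ‖z⁻¹‖ₑ) ∧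
      (n < m → ‖(z - γ m)⁻¹‖ₑ ≤ D * ‖(γ m)⁻¹‖ₑ)) {A B : ℝ≥0∞}
    (hA : ∀ n, localTerm γ v μ n ≤ A) (hB : ∀ n, globalTerm γ v μ n ≤ B) :
    IsCarlesonBound γ v μ (3 * (A + 8 * D ^ 2 * B)) := by
  intro a
  have hdiag : ∑' n, ‖a n‖ₑ ^ 2 * ENNReal.ofReal (v n) * localTerm γ v μ n ≤ A * enormSqV v a := by
    rw [mul_comm, enormSqV, ← ENNReal.tsum_mul_right]
    gcongr with n
    exact hA n
  calc ∫⁻ z, ‖Hfun γ v a z‖ₑ ^ 2 ∂μ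
      = ∫⁻ z in ⋃ n, Omega γ n, ‖Hfun γ v a z‖ₑ ^ 2 ∂μ := by
        rw [iUnion_Omega (hs.tendsto_norm_atTop (hγ 0)), setLIntegral_univ]
    _ ≤ ∑' n, ∫⁻ z in Omega γ n, ‖Hfun γ v a z‖ₑ ^ 2 ∂μ := lintegral_iUnion_le _ _
    _ ≤ _ := ENNReal.tsum_le_tsum fun n ↦ setLIntegral_enorm_Hfun_sq_le (fun n ↦ (hv n).le) hD a
        (fun m z hz ↦ (hfar m n z hz).1) fun m z hz ↦ (hfar m n z hz).2
    _ ≤ 3 * (D ^ 2 * (4 * B * enormSqV v a) + A * enormSqV v a +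
          D ^ 2 * (4 * B * enormSqV v a)) := by
        simp only [ENNReal.tsum_mul_left, ENNReal.tsum_add]
        grw [hdiag, tsum_sum_range_sq_mul_lintegral_le hv hsum hB,
          tsum_tsum_add_sq_mul_measure_le hv hγ hsum hB]
    _ = 3 * (A + 8 * D ^ 2 * B) * enormSqV v a := by ring

end Sufficiency

/-- **Theorem (Belov–Mengestie–Seip).** For a sparse sequence `Γ`, an admissible weight `v`
and a nonnegative measure `μ` with `μ(Γ) = 0`, the following are equivalent:
(1) the weighted discrete Hilbert transform `(a_n) ↦ ∑_n a_n v_n/(z-γ_n)` is bounded from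
`ℓ²_v` to `L²(ℂ,μ)`; (2) `μ` is a Carleson measure for `𝓗(Γ,v)`; (3) both
`sup_n ∫_{Ω_n} v_n/|z-γ_n|² dμ < ∞` and
`sup_n ((∑_{m=1}^n v_m)(∑_{m=n+1}^∞ ∫_{Ω_m}|z|⁻²dμ) + (∑_{m=n+1}^∞ v_m/|γ_m|²)(∑_{m=1}^n μ(Ω_m))) < ∞`. -/
theorem carleson_tfae (γ : ℕ → ℂ) (v : ℕ → ℝ)
    (hγ_inj : Function.Injective γ) (hγ_ne : ∀ n, γ n ≠ 0)
    (hγ_mono : Monotone fun n => ‖γ n‖) (hγ_sparse : Sparse γ)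
    (hv : ∀ n, 0 < v n) (hadm : Admissible γ v)
    (μ : Measure ℂ) (hμΓ : μ (Set.range γ) = 0) :
    List.TFAE
      [(∃ C : ℝ, 0 < C ∧ ∀ a : ℕ → ℂ, Summable (fun n => ‖a n‖ ^ 2 * v n) →
          ∫⁻ z, (‖∑' n, a n * (v n : ℂ) / (z - γ n)‖₊ : ℝ≥0∞) ^ 2 ∂μ ≤
            ENNReal.ofReal (C * ∑' n, ‖a n‖ ^ 2 * v n)),
        IsCarleson γ v μ,
        (⨆ n, localTerm γ v μ n) < ⊤ ∧ (⨆ n, globalTerm γ v μ n) < ⊤] := by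
  have hv₀ (n : ℕ) : 0 ≤ v n := (hv n).le
  have hsum := hadm.summable_div_norm_sq hv₀ (hγ_ne 0) hγ_mono
  tfae_have 1 ↔ 2 := Iff.rfl
  tfae_have 2 → 3 := fun h ↦ by
    obtain ⟨C, hC, hbound⟩ := (isCarleson_iff_exists_isCarlesonBound hv₀).1 h
    exact ⟨(iSup_le (hbound.localTerm_le hv₀)).trans_lt hC.lt_top,
      (iSup_le (hbound.globalTerm_le hγ_sparse hγ_ne hv₀ hsum)).trans_lt (by finiteness)⟩
  tfae_have 3 → 2 := fun ⟨hlocal, hglobal⟩ ↦ by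
    obtain ⟨D, hD, hfar⟩ := hγ_sparse.exists_enorm_inv_sub_le
    exact (isCarleson_iff_exists_isCarlesonBound hv₀).2 ⟨_, by finiteness,
      isCarlesonBound_of_localTerm_le_of_globalTerm_le hγ_sparse hγ_ne hv hsum hD hfar
        (le_iSup _) (le_iSup _)⟩
  tfae_finish
end
end

section
/- For a nonnegative Borel measure μ on ℂ with μ(Γ) = 0, one has ∫_ℂ (∑_{n≥1} v_n/|z−γ_n|²) dμ(z) < ∞ if and only if both ∑_{m≥1} ∫_{Ω_m} v_m/|z−γ_m|² dμ(z) < ∞ and ∑_{m≥1} v_m ∑_{j=m+1}^∞ ∫_{Ω_j} |z|^{-2} dμ(z) + ∑_{m≥1} (v_m/|γ_m|²) ∑_{j=1}^{m-1} μ(Ω_j) < ∞ hold. -/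
open MeasureTheory Filter Topology
open scoped ENNReal NNReal

noncomputable section

/-! For `z ∈ Ω_j` with `j ≠ m`, sparseness makes one of `|z|`, `|γ_m|` at most a fixed fraction of
the other. Hence `|z - γ_m|` is comparable to the larger of the two, `|γ_m|` when `j < m` and `|z|`
when `m < j`, with constants independent of `z`, `j` and `m`. Splitting the integral of the `m`-th
summand of the kernel over the shells inside, equal to and outside `Ω_m` gives the three sums. -/

/-- Two extended nonnegative numbers are `K`-comparable if each is at most `K` times the other. -/
def Comparable (K a b : ℝ≥0∞) : Prop := a ≤ K * b ∧ b ≤ K * a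

namespace Comparable

variable {K : ℝ≥0∞}

theorem lt_top_iff {a b : ℝ≥0∞} (h : Comparable K a b) (hK : K ≠ ⊤) : a < ⊤ ↔ b < ⊤ :=
  ⟨fun ha => h.2.trans_lt (ENNReal.mul_lt_top hK.lt_top ha),
    fun hb => h.1.trans_lt (ENNReal.mul_lt_top hK.lt_top hb)⟩

theorem sum {ι : Type*} {s : Finset ι} {f g : ι → ℝ≥0∞}
    (h : ∀ i ∈ s, Comparable K (f i) (g i)) : Comparable K (∑ i ∈ s, f i) (∑ i ∈ s, g i) := by
  simp only [Comparable, Finset.mul_sum]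
  exact ⟨Finset.sum_le_sum fun i hi => (h i hi).1, Finset.sum_le_sum fun i hi => (h i hi).2⟩

theorem tsum {ι : Type*} {f g : ι → ℝ≥0∞} (h : ∀ i, Comparable K (f i) (g i)) :
    Comparable K (∑' i, f i) (∑' i, g i) := by
  simp only [Comparable, ← ENNReal.tsum_mul_left]
  exact ⟨ENNReal.tsum_le_tsum fun i => (h i).1, ENNReal.tsum_le_tsum fun i => (h i).2⟩

theorem setLIntegral {α : Type*} [MeasurableSpace α] {μ : Measure α} {s : Set α}
    {f g : α → ℝ≥0∞} (hK : K ≠ ⊤) (hs : MeasurableSet s)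
    (h : ∀ x ∈ s, Comparable K (f x) (g x)) :
    Comparable K (∫⁻ x in s, f x ∂μ) (∫⁻ x in s, g x ∂μ) := by
  simp only [Comparable, ← lintegral_const_mul' _ _ hK]
  exact ⟨setLIntegral_mono' hs fun x hx => (h x hx).1,
    setLIntegral_mono' hs fun x hx => (h x hx).2⟩

end Comparable

theorem lintegral_eq_sum_add_add_tsum {α : Type*} [MeasurableSpace α] {s : ℕ → Set α}
    (hs : ∀ n, MeasurableSet (s n)) (hdisj : Pairwise (Function.onFun Disjoint s))
    (hcover : ⋃ n, s n = Set.univ) (μ : Measure α) (f : α → ℝ≥0∞) (m : ℕ) :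
    ∫⁻ x, f x ∂μ = (∑ j ∈ Finset.range m, ∫⁻ x in s j, f x ∂μ) + ∫⁻ x in s m, f x ∂μ +
      ∑' j, ∫⁻ x in s (m + 1 + j), f x ∂μ := by
  rw [← setLIntegral_univ, ← hcover, lintegral_iUnion hs hdisj, ← Finset.sum_range_succ,
    ← ENNReal.summable.sum_add_tsum_nat_add' (k := m + 1)]
  simp only [add_comm]

section Norm

variable {E : Type*} [SeminormedAddCommGroup E]

theorem one_sub_mul_norm_le_norm_sub {x y : E} {q : ℝ} (h : ‖x‖ ≤ q * ‖y‖) :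
    (1 - q) * ‖y‖ ≤ ‖x - y‖ := by
  rw [norm_sub_rev]
  linarith [norm_sub_norm_le y x]

theorem one_sub_mul_norm_sub_le_norm {x y : E} {q : ℝ} (hq : q ≤ 1) (h : ‖x‖ ≤ q * ‖y‖) :
    (1 - q) * ‖x - y‖ ≤ ‖y‖ :=
  calc (1 - q) * ‖x - y‖ ≤ (1 - q) * (‖x‖ + ‖y‖) :=
        mul_le_mul_of_nonneg_left (norm_sub_le x y) (sub_nonneg.mpr hq)
    _ ≤ (1 - q) * (q * ‖y‖ + ‖y‖) := by
        gcongr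
    _ = (1 - q ^ 2) * ‖y‖ := by ring
    _ ≤ ‖y‖ := mul_le_of_le_one_left (norm_nonneg y) (by linarith [sq_nonneg q])

theorem div_enorm_sq_le {x y : E} {η : ℝ} (hη : 0 < η) (h : η * ‖x‖ ≤ ‖y‖) (w : ℝ≥0∞) :
    w / ‖y‖ₑ ^ 2 ≤ (ENNReal.ofReal η ^ 2)⁻¹ * (w / ‖x‖ₑ ^ 2) := by
  have hle : ENNReal.ofReal η * ‖x‖ₑ ≤ ‖y‖ₑ := by
    rw [← ofReal_norm, ← ofReal_norm, ← ENNReal.ofReal_mul hη.le]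
    exact ENNReal.ofReal_le_ofReal h
  have hη0 : ENNReal.ofReal η ^ 2 ≠ 0 := pow_ne_zero 2 (ENNReal.ofReal_pos.mpr hη).ne'
  have hηtop : ENNReal.ofReal η ^ 2 ≠ ⊤ := ENNReal.pow_ne_top ENNReal.ofReal_ne_top
  calc w / ‖y‖ₑ ^ 2 ≤ w / (ENNReal.ofReal η * ‖x‖ₑ) ^ 2 := by gcongr
    _ = (ENNReal.ofReal η ^ 2)⁻¹ * (w / ‖x‖ₑ ^ 2) := by
        rw [mul_pow, div_eq_mul_inv, ENNReal.mul_inv (.inl hη0) (.inl hηtop), mul_left_comm,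
          ← div_eq_mul_inv]

theorem comparable_div_enorm_sub_sq {x y : E} {q : ℝ} (hq : q < 1) (h : ‖x‖ ≤ q * ‖y‖)
    (w : ℝ≥0∞) :
    Comparable (ENNReal.ofReal (1 - q) ^ 2)⁻¹ (w / ‖x - y‖ₑ ^ 2) (w / ‖y‖ₑ ^ 2) :=
  ⟨div_enorm_sq_le (sub_pos.mpr hq) (one_sub_mul_norm_le_norm_sub h) w,
    div_enorm_sq_le (sub_pos.mpr hq) (one_sub_mul_norm_sub_le_norm hq.le h) w⟩

end Norm

section Shell

variable {E : Type*} [SeminormedAddCommGroup E] {γ : ℕ → E}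

/-- The annular shells `Ω_n` of a sequence in a seminormed group, written as the differences of
the balls whose radii are the midpoints of consecutive moduli. -/
def shell (γ : ℕ → E) : ℕ → Set E :=
  disjointed fun n => Metric.ball 0 ((‖γ n‖ + ‖γ (n + 1)‖) / 2)

theorem mem_shell_iff {n : ℕ} {z : E} :
    z ∈ shell γ n ↔ ‖z‖ < (‖γ n‖ + ‖γ (n + 1)‖) / 2 ∧
      ∀ k < n, (‖γ k‖ + ‖γ (k + 1)‖) / 2 ≤ ‖z‖ := by
  simp [shell, disjointed_eq_inter_compl]

theorem Omega_eq_shell {γ : ℕ → ℂ} (hmono : Monotone fun n => ‖γ n‖) : Omega γ = shell γ := by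
  have hball : Monotone fun n => Metric.ball (0 : ℂ) ((‖γ n‖ + ‖γ (n + 1)‖) / 2) := by
    intro i j hij
    have hi : ‖γ i‖ ≤ ‖γ j‖ := hmono hij
    have hi' : ‖γ (i + 1)‖ ≤ ‖γ (j + 1)‖ := hmono (by lia)
    exact Metric.ball_subset_ball (by linarith)
  ext n z
  cases n with
  | zero => simp [Omega, shell]
  | succ n => simp [Omega, shell, hball.disjointed_add_one, and_comm]

theorem measurableSet_shell [MeasurableSpace E] [OpensMeasurableSpace E] (n : ℕ) :
    MeasurableSet (shell γ n) :=
  .disjointed (fun _ => measurableSet_ball) n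

theorem pairwise_disjoint_shell : Pairwise (Function.onFun Disjoint (shell γ)) :=
  disjoint_disjointed _

theorem iUnion_shell (hγ : Tendsto (fun n => ‖γ n‖) atTop atTop) :
    ⋃ n, shell γ n = Set.univ := by
  rw [shell, iUnion_disjointed, Set.iUnion_eq_univ_iff]
  intro z
  obtain ⟨n, hn⟩ := eventually_atTop.mp (hγ.eventually_gt_atTop ‖z‖)
  exact ⟨n, mem_ball_zero_iff.mpr (by linarith [hn n le_rfl, hn (n + 1) n.le_succ])⟩

end Shell

section Sparse

variable {E : Type*} [SeminormedAddCommGroup E] {γ : ℕ → E} {c : ℝ}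

theorem monotone_norm_of_mul_norm_le (hc : 1 < c) (hγ : ∀ n, c * ‖γ n‖ ≤ ‖γ (n + 1)‖) :
    Monotone fun n => ‖γ n‖ :=
  monotone_nat_of_le_succ fun n => (le_mul_of_one_le_left (norm_nonneg _) hc.le).trans (hγ n)

theorem norm_le_mul_norm_of_mem_shell_of_gt (hc : 1 < c)
    (hγ : ∀ n, c * ‖γ n‖ ≤ ‖γ (n + 1)‖) {m j : ℕ} (hmj : m < j) {z : E} (hz : z ∈ shell γ j) :
    ‖γ m‖ ≤ (1 + c⁻¹) / 2 * ‖z‖ := by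
  have hzm := (mem_shell_iff.mp hz).2 m hmj
  have hc0 : 0 < c := by linarith
  have hc1 : c⁻¹ * c = 1 := inv_mul_cancel₀ hc0.ne'
  have hc_inv : 0 < c⁻¹ := inv_pos.mpr hc0
  -- AM-GM: `(1 + c⁻¹) * (1 + c) ≥ 4`.
  have hamgm : 1 ≤ (1 + c⁻¹) / 2 * ((1 + c) / 2) := by nlinarith [sq_nonneg (c - 1)]
  calc ‖γ m‖ ≤ (1 + c⁻¹) / 2 * ((1 + c) / 2) * ‖γ m‖ :=
        le_mul_of_one_le_left (norm_nonneg _) hamgm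
    _ = (1 + c⁻¹) / 2 * ((‖γ m‖ + c * ‖γ m‖) / 2) := by ring
    _ ≤ (1 + c⁻¹) / 2 * ‖z‖ := by
        gcongr
        linarith [hγ m]

theorem norm_le_mul_norm_of_mem_shell_of_lt (hc : 1 < c)
    (hγ : ∀ n, c * ‖γ n‖ ≤ ‖γ (n + 1)‖) {m j : ℕ} (hjm : j < m) {z : E} (hz : z ∈ shell γ j) :
    ‖z‖ ≤ (1 + c⁻¹) / 2 * ‖γ m‖ := by
  have hc0 : 0 < c := by linarith
  have hj : ‖γ j‖ ≤ c⁻¹ * ‖γ (j + 1)‖ := (le_inv_mul_iff₀ hc0).mpr (hγ j)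
  have hm : ‖γ (j + 1)‖ ≤ ‖γ m‖ := monotone_norm_of_mul_norm_le hc hγ hjm
  calc ‖z‖ ≤ (‖γ j‖ + ‖γ (j + 1)‖) / 2 := (mem_shell_iff.mp hz).1.le
    _ ≤ (1 + c⁻¹) / 2 * ‖γ (j + 1)‖ := by linarith
    _ ≤ (1 + c⁻¹) / 2 * ‖γ m‖ := by gcongr

theorem exists_comparable_kernel (hc : 1 < c) (hγ : ∀ n, c * ‖γ n‖ ≤ ‖γ (n + 1)‖) :
    ∃ K : ℝ≥0∞, K ≠ ⊤ ∧ ∀ (m j : ℕ), ∀ z ∈ shell γ j, ∀ w : ℝ≥0∞,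
      (j < m → Comparable K (w / ‖z - γ m‖ₑ ^ 2) (w / ‖γ m‖ₑ ^ 2)) ∧
      (m < j → Comparable K (w / ‖z - γ m‖ₑ ^ 2) (w / ‖z‖ₑ ^ 2)) := by
  have hq : (1 + c⁻¹) / 2 < 1 := by linarith [inv_lt_one_of_one_lt₀ hc]
  refine ⟨(ENNReal.ofReal (1 - (1 + c⁻¹) / 2) ^ 2)⁻¹, ?_, fun m j z hz w => ⟨fun hjm => ?_,
    fun hmj => ?_⟩⟩
  · exact ENNReal.inv_ne_top.mpr (pow_ne_zero 2 (ENNReal.ofReal_pos.mpr (sub_pos.mpr hq)).ne')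
  · exact comparable_div_enorm_sub_sq hq (norm_le_mul_norm_of_mem_shell_of_lt hc hγ hjm hz) w
  · rw [← enorm_neg, neg_sub]
    exact comparable_div_enorm_sub_sq hq (norm_le_mul_norm_of_mem_shell_of_gt hc hγ hmj hz) w

variable [MeasurableSpace E] [OpensMeasurableSpace E]

/-- Division in `ℝ≥0∞` makes the `n`-th summand `⊤`, not the junk value `0`, where `‖z - γ n‖ₑ = 0`
and `v n ≠ 0`. -/
theorem lintegral_kernel_lt_top_iff_general (hc : 1 < c) (hγ : ∀ n, c * ‖γ n‖ ≤ ‖γ (n + 1)‖)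
    (hγ0 : 0 < ‖γ 0‖) (v : ℕ → ℝ≥0∞) (μ : Measure E) :
    (∫⁻ z, ∑' n, v n / ‖z - γ n‖ₑ ^ 2 ∂μ) < ⊤ ↔
      (∑' m, ∫⁻ z in shell γ m, v m / ‖z - γ m‖ₑ ^ 2 ∂μ) < ⊤ ∧
        (∑' m, v m * ∑' j, ∫⁻ z in shell γ (m + 1 + j), 1 / ‖z‖ₑ ^ 2 ∂μ) +
          (∑' m, v m / ‖γ m‖ₑ ^ 2 * ∑ j ∈ Finset.range m, μ (shell γ j)) < ⊤ := by
  obtain ⟨K, hK, hcomp⟩ := exists_comparable_kernel hc hγ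
  have hmeas (m : ℕ) : Measurable fun z => v m / ‖z - γ m‖ₑ ^ 2 := by
    have : Measurable fun z => ‖z - γ m‖ₑ := (by fun_prop : Continuous _).measurable
    fun_prop
  have hmeas_enorm : Measurable fun z : E => 1 / ‖z‖ₑ ^ 2 := by fun_prop
  have hinner (m : ℕ) : Comparable K
      (∑ j ∈ Finset.range m, ∫⁻ z in shell γ j, v m / ‖z - γ m‖ₑ ^ 2 ∂μ)
      (v m / ‖γ m‖ₑ ^ 2 * ∑ j ∈ Finset.range m, μ (shell γ j)) := by
    simp only [Finset.mul_sum, ← setLIntegral_const]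
    exact .sum fun j hj => .setLIntegral hK (measurableSet_shell j) fun z hz =>
      (hcomp m j z hz _).1 (Finset.mem_range.mp hj)
  have houter (m : ℕ) : Comparable K
      (∑' j, ∫⁻ z in shell γ (m + 1 + j), v m / ‖z - γ m‖ₑ ^ 2 ∂μ)
      (v m * ∑' j, ∫⁻ z in shell γ (m + 1 + j), 1 / ‖z‖ₑ ^ 2 ∂μ) := by
    simp only [← ENNReal.tsum_mul_left, ← lintegral_const_mul _ hmeas_enorm, mul_one_div]
    exact .tsum fun j => .setLIntegral hK (measurableSet_shell _) fun z hz =>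
      (hcomp m _ z hz _).2 (by lia)
  have hsplit (m : ℕ) := lintegral_eq_sum_add_add_tsum (measurableSet_shell (γ := γ))
    pairwise_disjoint_shell (iUnion_shell (tendsto_atTop_of_geom_le hγ0 hc hγ)) μ
    (fun z => v m / ‖z - γ m‖ₑ ^ 2) m
  rw [lintegral_tsum fun m => (hmeas m).aemeasurable, tsum_congr hsplit, ENNReal.tsum_add,
    ENNReal.tsum_add, ENNReal.add_lt_top, ENNReal.add_lt_top, ENNReal.add_lt_top,
    (Comparable.tsum hinner).lt_top_iff hK, (Comparable.tsum houter).lt_top_iff hK]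
  tauto

end Sparse

section OfReal

variable {E : Type*} [NormedAddCommGroup E]

theorem ofReal_div_norm_sq_s7 {x : E} (hx : x ≠ 0) (a : ℝ) :
    ENNReal.ofReal (a / ‖x‖ ^ 2) = ENNReal.ofReal a / ‖x‖ₑ ^ 2 := by
  rw [ENNReal.ofReal_div_of_pos (pow_pos (norm_pos_iff.mpr hx) 2),
    ENNReal.ofReal_pow (norm_nonneg x), ofReal_norm]

theorem ae_ofReal_div_norm_sub_sq {ι : Type*} [MeasurableSpace E] {μ : Measure E} {γ : ι → E}
    (hμ : μ (Set.range γ) = 0) (v : ι → ℝ) :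
    ∀ᵐ z ∂μ, ∀ n, ENNReal.ofReal (v n / ‖z - γ n‖ ^ 2) =
      ENNReal.ofReal (v n) / ‖z - γ n‖ₑ ^ 2 := by
  filter_upwards [measure_eq_zero_iff_ae_notMem.mp hμ] with z hz n
  exact ofReal_div_norm_sq_s7 (sub_ne_zero.mpr fun h => hz ⟨n, h.symm⟩) (v n)

theorem lintegral_tsum_ofReal_div_norm_sub_sq {ι : Type*} [MeasurableSpace E] {μ : Measure E}
    {γ : ι → E} (hμ : μ (Set.range γ) = 0) (v : ι → ℝ) :
    ∫⁻ z, ∑' n, ENNReal.ofReal (v n / ‖z - γ n‖ ^ 2) ∂μ =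
      ∫⁻ z, ∑' n, ENNReal.ofReal (v n) / ‖z - γ n‖ₑ ^ 2 ∂μ :=
  lintegral_congr_ae ((ae_ofReal_div_norm_sub_sq hμ v).mono fun _ hz => tsum_congr hz)

theorem setLIntegral_ofReal_div_norm_sub_sq {ι : Type*} [MeasurableSpace E] {μ : Measure E}
    {γ : ι → E} (hμ : μ (Set.range γ) = 0) (v : ι → ℝ) (s : Set E) (n : ι) :
    ∫⁻ z in s, ENNReal.ofReal (v n / ‖z - γ n‖ ^ 2) ∂μ =
      ∫⁻ z in s, ENNReal.ofReal (v n) / ‖z - γ n‖ₑ ^ 2 ∂μ :=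
  lintegral_congr_ae (ae_restrict_of_ae ((ae_ofReal_div_norm_sub_sq hμ v).mono fun _ hz => hz n))

theorem setLIntegral_shell_ofReal_div_norm_sq [MeasurableSpace E] [OpensMeasurableSpace E]
    {γ : ℕ → E} (hγ : γ 0 ≠ 0) (μ : Measure E) (a : ℝ) {j : ℕ} (hj : j ≠ 0) :
    ∫⁻ z in shell γ j, ENNReal.ofReal (a / ‖z‖ ^ 2) ∂μ =
      ∫⁻ z in shell γ j, ENNReal.ofReal a / ‖z‖ₑ ^ 2 ∂μ := by
  refine setLIntegral_congr_fun (measurableSet_shell j) fun z hz => ofReal_div_norm_sq_s7 ?_ a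
  have hz0 := (mem_shell_iff.mp hz).2 0 (Nat.pos_of_ne_zero hj)
  have hγ0 := norm_pos_iff.mpr hγ
  exact norm_pos_iff.mp (by linarith [norm_nonneg (γ (0 + 1))])

end OfReal

/-- `∫_ℂ ∑_n v_n/|z-γ_n|² dμ < ∞` if and only if both
`∑_m ∫_{Ω_m} v_m/|z-γ_m|² dμ < ∞` and
`∑_m v_m ∑_{j=m+1}^∞ ∫_{Ω_j} |z|⁻² dμ + ∑_m (v_m/|γ_m|²) ∑_{j=1}^{m-1} μ(Ω_j) < ∞`. -/
theorem lintegral_kernel_lt_top_iff (γ : ℕ → ℂ) (v : ℕ → ℝ)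
    (hγ_inj : Function.Injective γ) (hγ_ne : ∀ n, γ n ≠ 0)
    (hγ_mono : Monotone fun n => ‖γ n‖) (hγ_sparse : Sparse γ)
    (hv : ∀ n, 0 < v n) (hadm : Admissible γ v)
    (μ : Measure ℂ) (hμΓ : μ (Set.range γ) = 0) :
    (∫⁻ z, ∑' n, ENNReal.ofReal (v n / ‖z - γ n‖ ^ 2) ∂μ) < ⊤ ↔
      (∑' m, ∫⁻ z in Omega γ m, ENNReal.ofReal (v m / ‖z - γ m‖ ^ 2) ∂μ) < ⊤ ∧
        (∑' m, ENNReal.ofReal (v m) *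
            ∑' j, ∫⁻ z in Omega γ (m + 1 + j), ENNReal.ofReal (1 / ‖z‖ ^ 2) ∂μ) +
          (∑' m, ENNReal.ofReal (v m / ‖γ m‖ ^ 2) * ∑ j ∈ Finset.range m, μ (Omega γ j)) < ⊤ := by
  obtain ⟨c, hc, hγ⟩ := hγ_sparse
  simpa only [Omega_eq_shell hγ_mono, lintegral_tsum_ofReal_div_norm_sub_sq hμΓ v,
    setLIntegral_ofReal_div_norm_sub_sq hμΓ v, ofReal_div_norm_sq_s7 (hγ_ne _), ENNReal.ofReal_one,
    fun m j : ℕ => setLIntegral_shell_ofReal_div_norm_sq (hγ_ne 0) μ 1 (j := m + 1 + j) (by lia)]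
    using lintegral_kernel_lt_top_iff_general hc hγ (norm_pos_iff.mpr (hγ_ne 0)) _ μ
end
end

section
/- Let (v_m)_{m≥1} be positive reals with V_n = ∑_{m=1}^{n-1} v_m → ∞, and let (τ_l)_{l≥1} be nonnegative reals such that lim_{n→∞} V_{n+1} · ∑_{l=n+1}^∞ τ_l² = 0. Then there is an absolute constant C such that for every ε > 0 there exists N with ∑_{l=m+1}^∞ τ_l² V_l^{1/2} ≤ C ε V_{m+1}^{-1/2} for all m ≥ N. -/
open MeasureTheory Filter Topology
open scoped ENNReal NNReal

noncomputable section

/-!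
Write `S n` for the tail `∑_{l ≥ n} a l`. Instead of cutting the sum into dyadic blocks, one
telescopes: by concavity of `x ↦ x ^ (1 - θ)`, the increment `a n = S n - S (n + 1)` satisfies
`(1 - θ) * a n ≤ S n ^ θ * (S n ^ (1 - θ) - S (n + 1) ^ (1 - θ))`. Where `S n * V n ≤ ε`,
multiplying by `V n ^ θ` replaces the factor `S n ^ θ` by `ε ^ θ`, so the weighted sum from `m` on
is at most `ε ^ θ * S m ^ (1 - θ) / (1 - θ) ≤ ε / (1 - θ) / V m ^ (1 - θ)`.
The theorem is the case `θ = 1 / 2`.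
-/

lemma rpow_mul_rpow_one_sub {x : ℝ} (hx : 0 ≤ x) (θ : ℝ) : x ^ θ * x ^ (1 - θ) = x := by
  rw [← Real.rpow_add' hx (by simp), add_sub_cancel, Real.rpow_one]

lemma one_sub_mul_sub_le_rpow_mul_sub {θ x y : ℝ} (hθ₀ : 0 ≤ θ) (hθ₁ : θ ≤ 1) (hx : 0 ≤ x)
    (hy : 0 ≤ y) : (1 - θ) * (x - y) ≤ x ^ θ * (x ^ (1 - θ) - y ^ (1 - θ)) := by
  have amgm : x ^ θ * y ^ (1 - θ) ≤ θ * x + (1 - θ) * y :=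
    Real.geom_mean_le_arith_mean2_weighted hθ₀ (sub_nonneg.2 hθ₁) hx hy (add_sub_cancel _ _)
  rw [mul_sub (x ^ θ), rpow_mul_rpow_one_sub hx]
  linarith

lemma sub_mul_rpow_le_of_mul_le {θ x y w ε : ℝ} (hθ₀ : 0 ≤ θ) (hθ₁ : θ < 1) (hy : 0 ≤ y)
    (hyx : y ≤ x) (hw : 0 ≤ w) (h : x * w ≤ ε) :
    (x - y) * w ^ θ ≤ ε ^ θ / (1 - θ) * (x ^ (1 - θ) - y ^ (1 - θ)) := by
  have hx : 0 ≤ x := hy.trans hyx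
  have hθ : 0 < 1 - θ := sub_pos.2 hθ₁
  have increment_nonneg : 0 ≤ x ^ (1 - θ) - y ^ (1 - θ) :=
    sub_nonneg.2 (Real.rpow_le_rpow hy hyx hθ.le)
  rw [div_mul_eq_mul_div, le_div_iff₀ hθ]
  calc (x - y) * w ^ θ * (1 - θ)
      = (1 - θ) * (x - y) * w ^ θ := by ring
    _ ≤ x ^ θ * (x ^ (1 - θ) - y ^ (1 - θ)) * w ^ θ :=
        mul_le_mul_of_nonneg_right (one_sub_mul_sub_le_rpow_mul_sub hθ₀ hθ₁.le hx hy)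
          (Real.rpow_nonneg hw θ)
    _ = (x * w) ^ θ * (x ^ (1 - θ) - y ^ (1 - θ)) := by rw [Real.mul_rpow hx hw]; ring
    _ ≤ ε ^ θ * (x ^ (1 - θ) - y ^ (1 - θ)) := by gcongr

lemma rpow_mul_rpow_one_sub_le_div {θ x w ε : ℝ} (hθ : θ ≤ 1) (hx : 0 ≤ x) (hw : 0 < w)
    (h : x * w ≤ ε) : ε ^ θ * x ^ (1 - θ) ≤ ε / w ^ (1 - θ) := by
  have hε : 0 ≤ ε := (mul_nonneg hx hw.le).trans h
  rw [le_div_iff₀ (by positivity)]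
  calc ε ^ θ * x ^ (1 - θ) * w ^ (1 - θ)
      = ε ^ θ * (x * w) ^ (1 - θ) := by rw [Real.mul_rpow hx hw.le, mul_assoc]
    _ ≤ ε ^ θ * ε ^ (1 - θ) := by gcongr
    _ = ε := rpow_mul_rpow_one_sub hε θ

lemma tsum_add_left_eq_add_tsum_succ {G : Type*} [AddCommGroup G] [TopologicalSpace G]
    [IsTopologicalAddGroup G] [T2Space G] {a : ℕ → G} (hs : Summable a) (n : ℕ) :
    ∑' l, a (n + l) = a n + ∑' l, a (n + 1 + l) := by
  have hsn : Summable fun l => a (n + l) := by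
    simpa only [add_comm n] using (summable_nat_add_iff n).2 hs
  simpa only [add_zero, add_assoc, add_comm 1] using hsn.tsum_eq_zero_add

lemma summable_of_summable_mul_of_le {ι : Type*} {a b : ι → ℝ} {c : ℝ} (ha : ∀ k, 0 ≤ a k)
    (hc : 0 < c) (hcb : ∀ k, c ≤ b k) (h : Summable fun k => a k * b k) : Summable a :=
  (summable_mul_right_iff hc.ne').1 <|
    h.of_nonneg_of_le (fun k => mul_nonneg (ha k) hc.le)
      fun k => mul_le_mul_of_nonneg_left (hcb k) (ha k)

section WeightedTail

variable {θ ε : ℝ} {V a : ℕ → ℝ}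

lemma sum_range_mul_rpow_le (hθ₀ : 0 ≤ θ) (hθ₁ : θ < 1) (hV : ∀ n, 0 ≤ V n) (ha : ∀ n, 0 ≤ a n)
    (hs : Summable a) (h : ∀ n, (∑' l, a (n + l)) * V n ≤ ε) (n : ℕ) :
    ∑ k ∈ Finset.range n, a k * V k ^ θ ≤ ε ^ θ / (1 - θ) * (∑' l, a l) ^ (1 - θ) := by
  set S : ℕ → ℝ := fun n => ∑' l, a (n + l)
  have hS (n : ℕ) : 0 ≤ S n := tsum_nonneg fun l => ha (n + l)
  have ha_eq (n : ℕ) : a n = S n - S (n + 1) :=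
    eq_sub_of_add_eq (tsum_add_left_eq_add_tsum_succ hs n).symm
  have hε : 0 ≤ ε := (mul_nonneg (hS 0) (hV 0)).trans (h 0)
  have hC : 0 ≤ ε ^ θ / (1 - θ) := div_nonneg (Real.rpow_nonneg hε θ) (sub_pos.2 hθ₁).le
  calc ∑ k ∈ Finset.range n, a k * V k ^ θ
      = ∑ k ∈ Finset.range n, (S k - S (k + 1)) * V k ^ θ :=
        Finset.sum_congr rfl fun k _ => by rw [← ha_eq k]
    _ ≤ ∑ k ∈ Finset.range n, ε ^ θ / (1 - θ) * (S k ^ (1 - θ) - S (k + 1) ^ (1 - θ)) :=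
        Finset.sum_le_sum fun k _ => sub_mul_rpow_le_of_mul_le hθ₀ hθ₁ (hS (k + 1))
          (sub_nonneg.1 (ha_eq k ▸ ha k)) (hV k) (h k)
    _ = ε ^ θ / (1 - θ) * (S 0 ^ (1 - θ) - S n ^ (1 - θ)) := by
        rw [← Finset.mul_sum, Finset.sum_range_sub' fun k => S k ^ (1 - θ)]
    _ ≤ ε ^ θ / (1 - θ) * S 0 ^ (1 - θ) :=
        mul_le_mul_of_nonneg_left (sub_le_self _ (Real.rpow_nonneg (hS n) _)) hC
    _ = ε ^ θ / (1 - θ) * (∑' l, a l) ^ (1 - θ) := by simp only [S, zero_add]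

lemma tsum_mul_rpow_le (hθ₀ : 0 ≤ θ) (hθ₁ : θ < 1) (hV : ∀ n, 0 ≤ V n) (hV₀ : 0 < V 0)
    (ha : ∀ n, 0 ≤ a n) (hs : Summable a) (h : ∀ n, (∑' l, a (n + l)) * V n ≤ ε) :
    ∑' k, a k * V k ^ θ ≤ ε / (1 - θ) / V 0 ^ (1 - θ) := by
  have h₀ : (∑' l, a l) * V 0 ≤ ε := by simpa only [zero_add] using h 0
  refine Real.tsum_le_of_sum_range_le
    (fun k => mul_nonneg (ha k) (Real.rpow_nonneg (hV k) θ)) fun n => ?_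
  calc ∑ k ∈ Finset.range n, a k * V k ^ θ
      ≤ ε ^ θ / (1 - θ) * (∑' l, a l) ^ (1 - θ) := sum_range_mul_rpow_le hθ₀ hθ₁ hV ha hs h n
    _ = ε ^ θ * (∑' l, a l) ^ (1 - θ) / (1 - θ) := div_mul_eq_mul_div _ _ _
    _ ≤ ε / V 0 ^ (1 - θ) / (1 - θ) :=
        div_le_div_of_nonneg_right
          (rpow_mul_rpow_one_sub_le_div hθ₁.le (tsum_nonneg ha) hV₀ h₀) (sub_pos.2 hθ₁).le
    _ = ε / (1 - θ) / V 0 ^ (1 - θ) := div_right_comm _ _ _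

theorem tail_dyadic_estimate_general (hθ₀ : 0 ≤ θ) (hθ₁ : θ < 1) (hV : Monotone V)
    (hV_pos : ∀ᶠ n in atTop, 0 < V n) (ha : ∀ n, 0 ≤ a n)
    (hlim : Tendsto (fun n => V n * ∑' l, a (n + l)) atTop (𝓝 0)) (hε : 0 < ε) :
    ∀ᶠ m in atTop, ∑' k, a (m + k) * V (m + k) ^ θ ≤ ε / (1 - θ) / V m ^ (1 - θ) := by
  filter_upwards [hV_pos, eventually_forall_ge_atTop.2 (hlim.eventually_le_const hε)] with m hm hle
  have hVm (k : ℕ) : V m ≤ V (m + k) := hV (Nat.le_add_right m k)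
  by_cases hs : Summable fun k => a (m + k)
  · refine tsum_mul_rpow_le (V := fun k => V (m + k)) hθ₀ hθ₁ (fun k => hm.le.trans (hVm k)) hm
      (fun k => ha (m + k)) hs fun n => ?_
    simpa only [add_assoc, mul_comm] using hle (m + n) (Nat.le_add_right m n)
  · -- A divergent `tsum` is `0`, and the weights `V (m + k) ^ θ ≥ V m ^ θ > 0` preserve divergence.
    have hdiv : ¬Summable fun k => a (m + k) * V (m + k) ^ θ := fun h =>
      hs <| summable_of_summable_mul_of_le (fun k => ha (m + k)) (Real.rpow_pos_of_pos hm θ)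
        (fun k => Real.rpow_le_rpow hm.le (hVm k) hθ₀) h
    rw [tsum_eq_zero_of_not_summable hdiv]
    exact div_nonneg (div_nonneg hε.le (sub_pos.2 hθ₁).le) (Real.rpow_nonneg hm.le _)

end WeightedTail

/-- Dyadic block estimate: if `V_n = ∑_{m=1}^{n-1} v_m → ∞` (here `v m` is the paper's
`v_{m+1}`, so the paper's `V_{n+1}` is `∑ m ∈ Finset.range n, v m`, and `τ l` is the
paper's `τ_{l+1}`) and `V_{n+1} ∑_{l=n+1}^∞ τ_l² → 0`, then there is an absolute constant
`C` such that for every `ε > 0` there is `N` with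
`∑_{l=m+1}^∞ τ_l² V_l^{1/2} ≤ C ε V_{m+1}^{-1/2}` for all `m ≥ N`. -/
theorem tail_dyadic_estimate :
    ∃ C : ℝ, 0 < C ∧
      ∀ (v τ : ℕ → ℝ), (∀ m, 0 < v m) → (∀ l, 0 ≤ τ l) →
        Tendsto (fun n => ∑ m ∈ Finset.range n, v m) atTop atTop →
        Tendsto (fun n => (∑ m ∈ Finset.range n, v m) * ∑' l, τ (n + l) ^ 2) atTop (𝓝 0) →
        ∀ ε > 0, ∃ N, ∀ m ≥ N,
          (∑' k, τ (m + k) ^ 2 * Real.sqrt (∑ i ∈ Finset.range (m + k), v i)) ≤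
            C * ε / Real.sqrt (∑ i ∈ Finset.range m, v i) := by
  refine ⟨2, two_pos, fun v τ hv _ _ hlim ε hε => eventually_atTop.1 ?_⟩
  have hV : Monotone fun n => ∑ i ∈ Finset.range n, v i :=
    (Finset.sum_mono_set_of_nonneg fun i => (hv i).le).comp Finset.range_mono
  have hV_pos : ∀ᶠ n in atTop, 0 < ∑ i ∈ Finset.range n, v i :=
    (eventually_gt_atTop 0).mono fun n hn =>
      Finset.sum_pos (fun i _ => hv i) (Finset.nonempty_range_iff.2 hn.ne')
  have half : (1 : ℝ) - 1 / 2 = 1 / 2 := sub_half 1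
  simpa only [half, ← Real.sqrt_eq_rpow, div_div_eq_mul_div, div_one, mul_comm ε] using
    tail_dyadic_estimate_general one_half_pos.le one_half_lt_one hV hV_pos
      (fun l => sq_nonneg (τ l)) hlim hε
end
end

section
/- Let (P_l)_{l≥0} be a nonincreasing sequence of positive reals with P_l → 0, and let (p_l)_{l≥1} be nonnegative reals such that lim_{n→∞} P_n · ∑_{l=1}^{n} p_l = 0. Then there is an absolute constant C such that for every ε > 0 there exists N with ∑_{l=1}^{m-1} p_l P_l^{1/2} ≤ C ε P_{m-1}^{-1/2} for all m ≥ N. -/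
open MeasureTheory Filter Topology
open scoped ENNReal NNReal

noncomputable section

/-!
Put `S n = ∑ l < n, p l` and `a n = √(P n)`, so that `a n * √(S n) → 0`. No dyadic decomposition is
needed: since `p l = (√(S (l+1)) + √(S l)) * (√(S (l+1)) - √(S l))`, an upper bound `M` for
`a * √S` gives `p l * a (l+1) ≤ 2 * M * (√(S (l+1)) - √(S l))`. This telescopes to
`∑ l < n, p l * a (l+1) ≤ 2 * M * √(S n)`, and multiplying by `a n` leaves
`2 * M * (a n * √(S n)) → 0`.
-/

lemma mul_le_two_mul_sqrt_add_sub_sqrt {s t a M : ℝ} (hs : 0 ≤ s) (ht : 0 ≤ t) (ha : 0 ≤ a)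
    (hM : a * √(s + t) ≤ M) : t * a ≤ 2 * M * (√(s + t) - √s) := by
  have hle : √s ≤ √(s + t) := Real.sqrt_le_sqrt (le_add_of_nonneg_right ht)
  have hdiff : 0 ≤ √(s + t) - √s := sub_nonneg.2 hle
  have hfactor : t = (√(s + t) + √s) * (√(s + t) - √s) := by
    rw [← sq_sub_sq, Real.sq_sqrt (add_nonneg hs ht), Real.sq_sqrt hs, add_sub_cancel_left]
  calc t * a = a * (√(s + t) + √s) * (√(s + t) - √s) := by linear_combination a * hfactor
    _ ≤ a * (√(s + t) + √(s + t)) * (√(s + t) - √s) :=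
        mul_le_mul_of_nonneg_right (by gcongr) hdiff
    _ = 2 * (a * √(s + t)) * (√(s + t) - √s) := by ring
    _ ≤ 2 * M * (√(s + t) - √s) :=
        mul_le_mul_of_nonneg_right (by gcongr) hdiff

section PartialSums

variable {p a : ℕ → ℝ}

lemma sum_mul_succ_le_two_mul_sqrt_sum {M : ℝ} (hp : ∀ l, 0 ≤ p l) (ha : ∀ l, 0 ≤ a l)
    (hM : ∀ l, a l * √(∑ i ∈ Finset.range l, p i) ≤ M) (n : ℕ) :
    ∑ l ∈ Finset.range n, p l * a (l + 1) ≤ 2 * M * √(∑ l ∈ Finset.range n, p l) := by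
  induction n with
  | zero => simp
  | succ n ih =>
    have hstep := mul_le_two_mul_sqrt_add_sub_sqrt (Finset.sum_nonneg fun l _ => hp l) (hp n)
      (ha (n + 1)) (Finset.sum_range_succ p n ▸ hM (n + 1))
    rw [Finset.sum_range_succ, Finset.sum_range_succ p]
    linarith

lemma tendsto_mul_sum_mul_succ (hp : ∀ l, 0 ≤ p l) (ha : ∀ l, 0 ≤ a l)
    (h : Tendsto (fun n => a n * √(∑ l ∈ Finset.range n, p l)) atTop (𝓝 0)) :
    Tendsto (fun n => a n * ∑ l ∈ Finset.range n, p l * a (l + 1)) atTop (𝓝 0) := by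
  obtain ⟨M, hM⟩ := h.bddAbove_range
  have hbound (n : ℕ) : a n * ∑ l ∈ Finset.range n, p l * a (l + 1) ≤
      2 * M * (a n * √(∑ l ∈ Finset.range n, p l)) :=
    calc a n * ∑ l ∈ Finset.range n, p l * a (l + 1)
        ≤ a n * (2 * M * √(∑ l ∈ Finset.range n, p l)) :=
          mul_le_mul_of_nonneg_left
            (sum_mul_succ_le_two_mul_sqrt_sum hp ha (Set.forall_mem_range.1 hM) n) (ha n)
      _ = 2 * M * (a n * √(∑ l ∈ Finset.range n, p l)) := mul_left_comm _ _ _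
  have hlim : Tendsto (fun n => 2 * M * (a n * √(∑ l ∈ Finset.range n, p l))) atTop (𝓝 0) := by
    simpa only [mul_zero] using h.const_mul (2 * M)
  exact squeeze_zero (fun n => mul_nonneg (ha n) <|
    Finset.sum_nonneg fun l _ => mul_nonneg (hp l) (ha (l + 1))) hbound hlim

end PartialSums

theorem head_dyadic_estimate_general {P p : ℕ → ℝ} (hP : ∀ l, 0 < P l) (hp : ∀ l, 0 ≤ p l)
    (h : Tendsto (fun n => P n * ∑ l ∈ Finset.range n, p l) atTop (𝓝 0)) {ε : ℝ} (hε : 0 < ε) :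
    ∀ᶠ n in atTop, ∑ l ∈ Finset.range n, p l * √(P (l + 1)) ≤ ε / √(P n) := by
  have hsqrt : Tendsto (fun n => √(P n) * √(∑ l ∈ Finset.range n, p l)) atTop (𝓝 0) := by
    simpa only [Real.sqrt_mul (hP _).le, Real.sqrt_zero] using h.sqrt
  have hlim := tendsto_mul_sum_mul_succ hp (fun l => Real.sqrt_nonneg (P l)) hsqrt
  filter_upwards [hlim.eventually_le_const hε] with n hn
  exact (le_div_iff₀' (Real.sqrt_pos.2 (hP n))).2 hn

/-- Dyadic block estimate: if `(P_l)_{l≥0}` is nonincreasing, positive, `P_l → 0`, the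
`p_l` are nonnegative (here `p l` is the paper's `p_{l+1}` while `P` keeps its indexing)
and `P_n ∑_{l=1}^n p_l → 0`, then there is an absolute constant `C` such that for every
`ε > 0` there is `N` with `∑_{l=1}^{m-1} p_l P_l^{1/2} ≤ C ε P_{m-1}^{-1/2}` for all
`m ≥ N`. -/
theorem head_dyadic_estimate :
    ∃ C : ℝ, 0 < C ∧
      ∀ (P p : ℕ → ℝ), (∀ l, 0 < P l) → Antitone P → Tendsto P atTop (𝓝 0) →
        (∀ l, 0 ≤ p l) →
        Tendsto (fun n => P n * ∑ l ∈ Finset.range n, p l) atTop (𝓝 0) →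
        ∀ ε > 0, ∃ N, ∀ m ≥ N,
          (∑ l ∈ Finset.range (m - 1), p l * Real.sqrt (P (l + 1))) ≤
            C * ε / Real.sqrt (P (m - 1)) := by
  refine ⟨1, one_pos, fun P p hP _ _ hp h ε hε => eventually_atTop.1 ?_⟩
  simpa only [one_mul] using (tendsto_sub_atTop_nat 1).eventually
    (head_dyadic_estimate_general hP hp h hε)
end
end
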